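/- Let α ∈ Δ' be regular, meaning that for every α' ∈ Δ', I(α') = I(α) implies α' = α. Then the restriction of the shift σ to C_α is uniquely ergodic (there is exactly one σ-invariant Borel probability measure supported on C_α), every point s ∈ C_α has Birkhoff digit frequency κ̂(s) = α, and the unique invariant measure μ satisfies ∫ κ dμ = α. -/

import Mathlib

open Filter Topology MeasureTheory

/-- The sequence space `Σ⁺ = {0,1,2}^ℕ` (with the product topology). -/
abbrev Seq3 := ℕ → Fin 3

/-- The shift map `σ`. -/
def shift (s : Seq3) : Seq3 := fun n => s (n + 1)

/-- The observable `κ(s) = e_{s₀}`. -/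
noncomputable def kappa (s : Seq3) : Fin 3 → ℝ := fun i => if i = s 0 then 1 else 0

/-- The cocycle `κ_σ(s,r) = Σ_{i<r} κ(σⁱ s)`. -/
noncomputable def birk (s : Seq3) (r : ℕ) : Fin 3 → ℝ :=
  ∑ i ∈ Finset.range r, kappa (shift^[i] s)

/-- The Birkhoff digit frequency of `s` exists and equals `v`. -/
def hasFreq (s : Seq3) (v : Fin 3 → ℝ) : Prop :=
  Tendsto (fun r : ℕ => (r : ℝ)⁻¹ • birk s r) atTop (nhds v)

/-- The lexicographic order on `Σ⁺`. -/
def lexLe (s t : Seq3) : Prop :=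
  s = t ∨ ∃ n, (∀ i, i < n → s i = t i) ∧ s n < t n

/-- The set `Max` of maximal sequences. -/
def MaxSet : Set Seq3 := {w | w 0 = 2 ∧ ∀ r : ℕ, lexLe (shift^[r] w) w}

/-- The symbolic β-shift `B(w)`. -/
def BetaShift (w : Seq3) : Set Seq3 := {s | ∀ r : ℕ, lexLe (shift^[r] s) w}

/-- The digit frequency set `DF(w)`. -/
def DF (w : Seq3) : Set (Fin 3 → ℝ) := {v | ∃ s ∈ BetaShift w, hasFreq s v}

/-- The Misiurewicz–Ziemian digit frequency set `DF_MZ(X)` of a subset `X ⊆ Σ⁺`. -/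
def DFMZ (X : Set Seq3) : Set (Fin 3 → ℝ) :=
  {v | ∃ (s : ℕ → Seq3) (r : ℕ → ℕ), (∀ i, s i ∈ X) ∧ Tendsto r atTop atTop ∧
    Tendsto (fun i => (r i : ℝ)⁻¹ • birk (s i) (r i)) atTop (nhds v)}

/-- The standard 2-simplex `Δ ⊆ ℝ³`. -/
def Delta : Set (Fin 3 → ℝ) := {α | (∀ i, 0 ≤ α i) ∧ α 0 + α 1 + α 2 = 1}

/-- `Δ' = {α ∈ Δ : α₂ > 0}`. -/
def Delta' : Set (Fin 3 → ℝ) := {α | α ∈ Delta ∧ 0 < α 2}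

/-- `I` is the infimax sequence of `α`: the infimum, in the lexicographic order, of the
(nonempty) set of maximal sequences with digit frequency `α`; it belongs to `Max`. -/
def IsInfimax (α : Fin 3 → ℝ) (I : Seq3) : Prop :=
  {w | w ∈ MaxSet ∧ hasFreq w α}.Nonempty ∧ I ∈ MaxSet ∧
    (∀ w, w ∈ MaxSet ∧ hasFreq w α → lexLe I w) ∧
    (∀ b : Seq3, (∀ w, w ∈ MaxSet ∧ hasFreq w α → lexLe b w) → lexLe b I)

/-- The closure of the forward `σ`-orbit of `s` (e.g. `C_α` is `orbitClosure I(α)`). -/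
def orbitClosure (s : Seq3) : Set Seq3 := closure {t | ∃ r : ℕ, shift^[r] s = t}

/-- A vector in `ℝ³` is rational if all its coordinates are. -/
def IsRat (v : Fin 3 → ℝ) : Prop := ∀ i, ∃ q : ℚ, v i = (q : ℝ)

/-- A minimal set of a continuous map: a nonempty compact invariant set in which every
point has dense forward orbit. -/
def IsMinimalSet {X : Type*} [TopologicalSpace X] (f : X → X) (C : Set X) : Prop :=
  C.Nonempty ∧ IsCompact C ∧ Set.MapsTo f C C ∧
    ∀ x ∈ C, C ⊆ closure {y | ∃ n : ℕ, f^[n] x = y}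

/-!
The frequencies in `Δ'` are renormalised by the substitutions `Λ_n : 0 ↦ 1, 1 ↦ 2 0ⁿ⁺¹, 2 ↦ 2 0ⁿ`:
every `α ∈ Δ'` is the frequency induced by `Λ_n` from a frequency in `Δ'`, for some `n`, and
iterating this produces an itinerary `n 0, n 1, …` of `α`. Since `Λ_n` preserves the lexicographic
order, and a sequence of frequency `α` can be desubstituted from below, the infimax sequence of `α`
is the limit of `Λ_{n 0} ∘ ⋯ ∘ Λ_{n (R - 1)}`. So `α` is regular exactly when it is the only
frequency with its itinerary.

Any limit of digit frequencies of longer and longer orbit segments of `I(α)` again has the itinerary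
of `α`, hence equals `α` if `α` is regular; by compactness, digit frequencies converge uniformly
along the orbit of `I(α)`. Regularity passes to the tails of the itinerary, so the same holds for
the sequence of digits that codes `I(α)` by the words of `Λ_{n 0} ∘ ⋯ ∘ Λ_{n (R - 1)}`. These words
can be made arbitrarily long, and then the Birkhoff sums of a continuous function are determined, up
to a small relative error, by the number of occurrences of each word. Hence all Birkhoff averages
converge uniformly to constants on `C_α`, which forces unique ergodicity.
-/

section BirkhoffAverages

variable {X E : Type*} {T : X → X} {f : X → E}

lemma norm_birkhoffSum_le [SeminormedAddCommGroup E] {B : ℝ} (hf : ∀ x, ‖f x‖ ≤ B)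
    (N : ℕ) (x : X) : ‖birkhoffSum T f N x‖ ≤ N * B :=
  (norm_sum_le_of_le _ fun _ _ => hf _).trans_eq (by simp)

lemma norm_birkhoffSum_iterate_sub_le [SeminormedAddCommGroup E] {B : ℝ} (hf : ∀ x, ‖f x‖ ≤ B)
    {o M N L : ℕ} (ho : o ≤ L) (hMN : M ≤ N) (hNM : N ≤ M + L) (x : X) :
    ‖birkhoffSum T f N (T^[o] x) - birkhoffSum T f M x‖ ≤ 3 * L * B := by
  have hB : 0 ≤ B := (norm_nonneg _).trans (hf x)
  have hbound : ∀ k ≤ L, ∀ y, ‖birkhoffSum T f k y‖ ≤ L * B := fun k hk y =>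
    (norm_birkhoffSum_le hf k y).trans (by gcongr)
  obtain ⟨k, rfl⟩ := Nat.exists_eq_add_of_le hMN
  have hsplit : birkhoffSum T f (M + k) (T^[o] x) - birkhoffSum T f M x =
      birkhoffSum T f k (T^[M] x) + birkhoffSum T f o (T^[M + k] x) - birkhoffSum T f o x := by
    have hcomm := birkhoffSum_add T f o (M + k) x
    rw [add_comm o, birkhoffSum_add T f (M + k) o, birkhoffSum_add T f M k] at hcomm
    rw [eq_sub_of_add_eq' hcomm.symm]
    abel
  rw [hsplit]
  refine (norm_sub_le _ _).trans ((add_le_add_left (norm_add_le _ _) _).trans ?_)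
  linarith [hbound k (by omega) (T^[M] x), hbound o ho (T^[M + k] x), hbound o ho x]

lemma norm_birkhoffAverage_le [SeminormedAddCommGroup E] [NormedSpace ℝ E] {B : ℝ}
    (hf : ∀ x, ‖f x‖ ≤ B) (N : ℕ) (x : X) : ‖birkhoffAverage ℝ T f N x‖ ≤ B := by
  have hB : 0 ≤ B := (norm_nonneg _).trans (hf x)
  rw [birkhoffAverage, norm_smul, norm_inv, Real.norm_natCast]
  exact inv_mul_le_of_le_mul₀ N.cast_nonneg hB (norm_birkhoffSum_le hf N x)

lemma norm_birkhoffAverage_sub_le [SeminormedAddCommGroup E] [NormedSpace ℝ E] {N : ℕ} (hN : N ≠ 0)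
    {c : E} {a : ℝ} {x : X} (h : ‖birkhoffSum T f N x - (N : ℝ) • c‖ ≤ a) :
    ‖birkhoffAverage ℝ T f N x - c‖ ≤ a / N := by
  have hN' : (N : ℝ) ≠ 0 := Nat.cast_ne_zero.2 hN
  rw [birkhoffAverage, ← inv_smul_smul₀ hN' c, ← smul_sub, norm_smul, norm_inv, Real.norm_natCast,
    div_eq_inv_mul]
  gcongr

lemma exists_tendstoUniformlyOn_const [PseudoMetricSpace E] [CompleteSpace E]
    {ι : Type*} {l : Filter ι} [l.NeBot] {F : ι → X → E} {S : Set X} (hS : S.Nonempty)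
    (h : ∀ ε > 0, ∃ c, ∀ᶠ i in l, ∀ x ∈ S, dist (F i x) c < ε) :
    ∃ c, TendstoUniformlyOn F (fun _ => c) l S := by
  obtain ⟨x₀, hx₀⟩ := hS
  have hcauchy : Cauchy (map (F · x₀) l) := by
    refine Metric.cauchy_iff.2 ⟨inferInstance, fun ε hε => ?_⟩
    obtain ⟨c, hc⟩ := h (ε / 2) (half_pos hε)
    refine ⟨Metric.ball c (ε / 2), hc.mono fun i hi => hi x₀ hx₀, fun a ha b hb => ?_⟩
    linarith [dist_triangle_right a b c, Metric.mem_ball.1 ha, Metric.mem_ball.1 hb]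
  obtain ⟨a, ha⟩ := CompleteSpace.complete hcauchy
  refine ⟨a, Metric.tendstoUniformlyOn_iff.2 fun ε hε => ?_⟩
  obtain ⟨c, hc⟩ := h (ε / 2) (half_pos hε)
  have hac : dist a c ≤ ε / 2 :=
    le_of_tendsto (Tendsto.dist ha tendsto_const_nhds) (hc.mono fun i hi => (hi x₀ hx₀).le)
  filter_upwards [hc] with i hi x hx
  linarith [dist_triangle_right a (F i x) c, hi x hx]

variable [TopologicalSpace X]

lemma continuous_birkhoffSum [AddCommMonoid E] [TopologicalSpace E] [ContinuousAdd E]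
    (hT : Continuous T) (hf : Continuous f) (N : ℕ) : Continuous (birkhoffSum T f N) :=
  continuous_finsetSum _ fun i _ => hf.comp (hT.iterate i)

lemma continuous_birkhoffAverage [AddCommGroup E] [Module ℝ E] [TopologicalSpace E]
    [ContinuousAdd E] [ContinuousConstSMul ℝ E]
    (hT : Continuous T) (hf : Continuous f) (N : ℕ) : Continuous (birkhoffAverage ℝ T f N) :=
  (continuous_birkhoffSum hT hf N).const_smul _

lemma tendstoUniformlyOn_closure [PseudoMetricSpace E] {ι : Type*} {l : Filter ι}
    {F : ι → X → E} {g : X → E} {S : Set X} (h : TendstoUniformlyOn F g l S)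
    (hF : ∀ i, Continuous (F i)) (hg : Continuous g) : TendstoUniformlyOn F g l (closure S) := by
  rw [Metric.tendstoUniformlyOn_iff] at h ⊢
  intro ε hε
  filter_upwards [h (ε / 2) (half_pos hε)] with i hi x hx
  have hle : closure S ⊆ {y | dist (g y) (F i y) ≤ ε / 2} :=
    closure_minimal (fun y hy => (hi y hy).le) (isClosed_le (hg.dist (hF i)) continuous_const)
  exact (hle hx).trans_lt (half_lt_self hε)

end BirkhoffAverages

section InvariantMeasures

variable {X : Type*} [MeasurableSpace X] {T : X → X} {K : Set X}

/-- The uniform probability measure on the orbit segment `x, T x, …, T^[N - 1] x`; it is the zero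
measure for `N = 0`. -/
noncomputable def empiricalMeasure (T : X → X) (x : X) (N : ℕ) : Measure X :=
  (N : NNReal)⁻¹ • ∑ i ∈ Finset.range N, Measure.dirac (T^[i] x)

instance isProbabilityMeasure_empiricalMeasure (x : X) (N : ℕ) :
    IsProbabilityMeasure (empiricalMeasure T x (N + 1)) := by
  refine ⟨?_⟩
  simp only [empiricalMeasure, Measure.smul_apply, Measure.coe_finsetSum, Finset.sum_apply,
    measure_univ, Finset.sum_const, Finset.card_range, nsmul_one]
  rw [ENNReal.smul_def, smul_eq_mul, ← ENNReal.coe_natCast, ← ENNReal.coe_mul,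
    inv_mul_cancel₀ (by positivity), ENNReal.coe_one]

variable [TopologicalSpace X] [BorelSpace X]

lemma integral_empiricalMeasure (x : X) (N : ℕ) {f : X → ℝ} (hf : Continuous f) :
    ∫ y, f y ∂(empiricalMeasure T x N) = birkhoffAverage ℝ T f N x := by
  have hm : StronglyMeasurable f := hf.stronglyMeasurable
  rw [empiricalMeasure, integral_smul_nnreal_measure, integral_finsetSum_measure]
  · simp [integral_dirac' _ _ hm, NNReal.smul_def, birkhoffAverage, birkhoffSum]
  · exact fun i _ => integrable_dirac' hm (by simp)

lemma empiricalMeasure_apply_eq_one (hK : IsClosed K) (hT : Set.MapsTo T K K) {x : X}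
    (hx : x ∈ K) (N : ℕ) : empiricalMeasure T x (N + 1) K = 1 := by
  have hae : ∀ᵐ y ∂(empiricalMeasure T x (N + 1)), y ∈ K := by
    refine Measure.ae_smul_measure ?_ _
    rw [← Measure.sum_coe_finset, Measure.ae_sum_iff]
    exact fun i => (ae_dirac_iff hK.measurableSet).2 (hT.iterate i hx)
  exact (prob_compl_eq_zero_iff hK.measurableSet).1 hae

variable {μ μ' : Measure X} [IsProbabilityMeasure μ] [IsProbabilityMeasure μ']

section

variable {E : Type*} [NormedAddCommGroup E] [NormedSpace ℝ E] [SecondCountableTopology E]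
  {f : X → E} {B : ℝ}

lemma integral_birkhoffAverage (hμ : MeasurePreserving T μ μ) (hf : Continuous f)
    (hB : ∀ x, ‖f x‖ ≤ B) {N : ℕ} (hN : N ≠ 0) :
    ∫ x, birkhoffAverage ℝ T f N x ∂μ = ∫ x, f x ∂μ := by
  have hintegrable : ∀ i, Integrable (fun x => f (T^[i] x)) μ := fun i =>
    (hμ.iterate i).integrable_comp_of_integrable
      (.of_bound hf.aestronglyMeasurable B (ae_of_all _ hB))
  have hinv : ∀ i, ∫ x, f (T^[i] x) ∂μ = ∫ x, f x ∂μ := fun i => by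
    have h := hμ.iterate i
    rw [← integral_map h.measurable.aemeasurable hf.aestronglyMeasurable, h.map_eq]
  simp only [birkhoffAverage, birkhoffSum, integral_smul]
  rw [integral_finsetSum _ fun i _ => hintegrable i, Finset.sum_congr rfl fun i _ => hinv i,
    Finset.sum_const, Finset.card_range, ← Nat.cast_smul_eq_nsmul ℝ,
    inv_smul_smul₀ (Nat.cast_ne_zero.2 hN)]

lemma integral_eq_of_tendsto_birkhoffAverage [CompleteSpace E] (hT : Continuous T)
    (hμ : MeasurePreserving T μ μ) (hf : Continuous f) (hB : ∀ x, ‖f x‖ ≤ B) {c : E}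
    (hc : ∀ᵐ x ∂μ, Tendsto (birkhoffAverage ℝ T f · x) atTop (𝓝 c)) : ∫ x, f x ∂μ = c := by
  have hlim : Tendsto (fun N => ∫ x, birkhoffAverage ℝ T f N x ∂μ) atTop (𝓝 (∫ _, c ∂μ)) :=
    tendsto_integral_of_dominated_convergence (fun _ => B)
      (fun N => (continuous_birkhoffAverage hT hf N).aestronglyMeasurable)
      (integrable_const B) (fun N => ae_of_all _ (norm_birkhoffAverage_le hB N)) hc
  have hconst : (fun N => ∫ x, birkhoffAverage ℝ T f N x ∂μ) =ᶠ[atTop] fun _ => ∫ x, f x ∂μ := by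
    filter_upwards [eventually_ne_atTop 0] with N hN using integral_birkhoffAverage hμ hf hB hN
  simpa using tendsto_nhds_unique (tendsto_const_nhds.congr' hconst.symm) hlim

end

variable [TopologicalSpace.PseudoMetrizableSpace X]

lemma measure_eq_of_tendsto_birkhoffAverage (hT : Continuous T) (hK : MeasurableSet K)
    (hμ : MeasurePreserving T μ μ) (hμK : μ K = 1)
    (hμ' : MeasurePreserving T μ' μ') (hμ'K : μ' K = 1)
    (h : ∀ f : X → ℝ, Continuous f →
      ∃ c, ∀ x ∈ K, Tendsto (birkhoffAverage ℝ T f · x) atTop (𝓝 c)) : μ = μ' := by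
  refine ext_of_forall_integral_eq_of_IsFiniteMeasure fun f => ?_
  obtain ⟨c, hc⟩ := h f f.continuous
  have key : ∀ ν : Measure X, IsProbabilityMeasure ν → MeasurePreserving T ν ν → ν K = 1 →
      ∫ x, f x ∂ν = c := fun ν _ hν hνK => by
    have hae : ∀ᵐ x ∂ν, x ∈ K := (prob_compl_eq_zero_iff hK).2 hνK
    exact integral_eq_of_tendsto_birkhoffAverage hT hν f.continuous f.norm_coe_le_norm
      (hae.mono hc)
  rw [key μ inferInstance hμ hμK, key μ' inferInstance hμ' hμ'K]

-- Krylov–Bogoliubov: a weak limit of empirical measures is invariant.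
lemma exists_invariant_probabilityMeasure [T2Space X] [CompactSpace X] (hT : Continuous T)
    (hK : IsClosed K) (hTK : Set.MapsTo T K K) (hne : K.Nonempty) :
    ∃ μ : Measure X, IsProbabilityMeasure μ ∧ MeasurePreserving T μ μ ∧ μ K = 1 := by
  obtain ⟨x, hx⟩ := hne
  let P : ℕ → ProbabilityMeasure X := fun N => ⟨empiricalMeasure T x (N + 1), inferInstance⟩
  let U : Ultrafilter ℕ := Ultrafilter.of atTop
  have hU : (U : Filter ℕ) ≤ atTop := Ultrafilter.of_le _
  obtain ⟨μ, -, hμ⟩ := (isCompact_univ (X := ProbabilityMeasure X)).ultrafilter_le_nhds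
    (U.map P) (by simp)
  have hμ : Tendsto P U (𝓝 μ) := hμ
  have havg : ∀ f : BoundedContinuousFunction X ℝ,
      Tendsto (fun N => birkhoffAverage ℝ T f (N + 1) x) U (𝓝 (∫ y, f y ∂(μ : Measure X))) :=
    fun f => (ProbabilityMeasure.tendsto_iff_forall_integral_tendsto.1 hμ f).congr
      fun N => integral_empiricalMeasure x (N + 1) f.continuous
  refine ⟨μ, inferInstance, ⟨hT.measurable, ?_⟩, le_antisymm prob_le_one ?_⟩
  · have := Measure.isProbabilityMeasure_map (μ := (μ : Measure X)) hT.measurable.aemeasurable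
    refine ext_of_forall_integral_eq_of_IsFiniteMeasure fun f => ?_
    rw [integral_map hT.measurable.aemeasurable f.continuous.aestronglyMeasurable]
    have hdiff := (tendsto_birkhoffAverage_apply_sub_birkhoffAverage' ℝ f.isBounded_range T x).comp
      (tendsto_add_atTop_nat 1)
    have hshift : ∀ N, birkhoffAverage ℝ T f N (T x) =
        birkhoffAverage ℝ T (f.compContinuous ⟨T, hT⟩) N x := fun N => by
      simp only [birkhoffAverage, birkhoffSum, BoundedContinuousFunction.compContinuous_apply,
        ContinuousMap.coe_mk, ← Function.iterate_succ_apply, Function.iterate_succ_apply']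
    simp only [Function.comp_def, hshift] at hdiff
    exact sub_eq_zero.1 (tendsto_nhds_unique
      ((havg (f.compContinuous ⟨T, hT⟩)).sub (havg f)) (hdiff.mono_left hU))
  · have hlimsup := ProbabilityMeasure.limsup_measure_closed_le_of_tendsto hμ hK
    have hone : ∀ N, (P N : Measure X) K = 1 := empiricalMeasure_apply_eq_one hK hTK hx
    rwa [funext hone, limsup_const] at hlimsup

end InvariantMeasures

section LexOrder

variable {A : Type*} [TopologicalSpace A]

instance instTopologicalSpaceLexSequence : TopologicalSpace (Lex (ℕ → A)) :=
  inferInstanceAs (TopologicalSpace (ℕ → A))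

lemma continuous_toLex_sequence : Continuous (toLex : (ℕ → A) → Lex (ℕ → A)) :=
  continuous_id

lemma continuous_ofLex_sequence : Continuous (ofLex : Lex (ℕ → A) → ℕ → A) :=
  continuous_id

instance instOrderClosedTopologyLexSequence [DiscreteTopology A] [LinearOrder A] :
    OrderClosedTopology (Lex (ℕ → A)) := by
  refine ⟨isOpen_compl_iff.1 ?_⟩
  have hopen : ∀ n, IsOpen {p : Lex (ℕ → A) × Lex (ℕ → A) |
      (∀ i < n, p.2 i = p.1 i) ∧ p.2 n < p.1 n} := fun n => by
    have hcoord : ∀ i, Continuous fun p : Lex (ℕ → A) × Lex (ℕ → A) => (p.2 i, p.1 i) := fun i =>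
      ((continuous_apply i).comp (continuous_ofLex_sequence.comp continuous_snd)).prodMk
        ((continuous_apply i).comp (continuous_ofLex_sequence.comp continuous_fst))
    have heq : IsOpen {p : Lex (ℕ → A) × Lex (ℕ → A) | ∀ i < n, p.2 i = p.1 i} := by
      simp only [Set.ofPred_forall]
      exact (Set.finite_Iio n).isOpen_biInter fun i _ =>
        (isOpen_discrete {q : A × A | q.1 = q.2}).preimage (hcoord i)
    exact heq.inter ((isOpen_discrete {q : A × A | q.1 < q.2}).preimage (hcoord n))
  convert isOpen_iUnion hopen using 1
  ext p
  simp only [Set.mem_compl_iff, Set.mem_ofPred_eq, not_le, Set.mem_iUnion]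
  rfl

end LexOrder

lemma lexLe_iff_toLex_le {s t : Seq3} : lexLe s t ↔ toLex s ≤ toLex t := by
  rw [le_iff_eq_or_lt]
  rfl

namespace lexLe

lemma refl (s : Seq3) : lexLe s s := Or.inl rfl

lemma trans {s t u : Seq3} (hst : lexLe s t) (htu : lexLe t u) : lexLe s u := by
  rw [lexLe_iff_toLex_le] at *
  exact hst.trans htu

lemma antisymm {s t : Seq3} (hst : lexLe s t) (hts : lexLe t s) : s = t := by
  rw [lexLe_iff_toLex_le] at *
  exact toLex.injective (hst.antisymm hts)

lemma of_tendsto {ι : Type*} {l : Filter ι} [l.NeBot] {s t : ι → Seq3} {s₀ t₀ : Seq3}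
    (hs : Tendsto s l (𝓝 s₀)) (ht : Tendsto t l (𝓝 t₀)) (h : ∀ᶠ i in l, lexLe (s i) (t i)) :
    lexLe s₀ t₀ := by
  simp only [lexLe_iff_toLex_le] at *
  exact le_of_tendsto_of_tendsto ((continuous_toLex_sequence.tendsto _).comp hs)
    ((continuous_toLex_sequence.tendsto _).comp ht) h

end lexLe

lemma exists_lt_of_not_lexLe {s t : Seq3} (h : ¬ lexLe s t) :
    ∃ n, (∀ i < n, s i = t i) ∧ t n < s n := by
  rw [lexLe_iff_toLex_le, not_le] at h
  obtain ⟨n, heq, hlt⟩ := h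
  exact ⟨n, fun i hi => (heq i hi).symm, hlt⟩

lemma exists_lexLe_greatest {K : Set Seq3} (hK : IsCompact K) (hne : K.Nonempty) :
    ∃ m ∈ K, ∀ s ∈ K, lexLe s m := by
  obtain ⟨m, hm, hub⟩ := (hK.image continuous_toLex_sequence).exists_isGreatest (hne.image _)
  obtain ⟨m, hmK, rfl⟩ := hm
  exact ⟨m, hmK, fun s hs => lexLe_iff_toLex_le.2 (hub (Set.mem_image_of_mem _ hs))⟩

section Shift

lemma shift_iterate_apply (s : Seq3) (k i : ℕ) : (shift^[k] s) i = s (k + i) := by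
  induction k generalizing s with
  | zero => simp
  | succ k ih =>
    rw [Function.iterate_succ_apply, ih]
    exact congrArg s (by omega)

lemma continuous_shift : Continuous shift :=
  continuous_pi fun n => continuous_apply (n + 1)

lemma continuous_kappa : Continuous kappa :=
  (continuous_of_discreteTopology (f := fun (d : Fin 3) i => if i = d then (1 : ℝ) else 0)).comp
    (continuous_apply 0)

/-- The forward `σ`-orbit of `s`. -/
def forwardOrbit (s : Seq3) : Set Seq3 := {t | ∃ r : ℕ, shift^[r] s = t}

lemma self_mem_forwardOrbit (s : Seq3) : s ∈ forwardOrbit s := ⟨0, rfl⟩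

lemma shift_iterate_mem_forwardOrbit {s t : Seq3} (ht : t ∈ forwardOrbit s) (k : ℕ) :
    shift^[k] t ∈ forwardOrbit s := by
  obtain ⟨r, rfl⟩ := ht
  exact ⟨k + r, Function.iterate_add_apply _ _ _ _⟩

lemma self_mem_orbitClosure (s : Seq3) : s ∈ orbitClosure s :=
  subset_closure (self_mem_forwardOrbit s)

lemma mapsTo_shift_orbitClosure (s : Seq3) :
    Set.MapsTo shift (orbitClosure s) (orbitClosure s) :=
  Set.MapsTo.closure (fun _ ht => shift_iterate_mem_forwardOrbit ht 1) continuous_shift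

end Shift

section Frequency

lemma norm_kappa_le (s : Seq3) : ‖kappa s‖ ≤ 1 := by
  rw [pi_norm_le_iff_of_nonneg zero_le_one]
  intro i
  unfold kappa
  split_ifs <;> simp

lemma birk_apply_nonneg (s : Seq3) (N : ℕ) (i : Fin 3) : 0 ≤ birk s N i := by
  rw [birk, Finset.sum_apply]
  refine Finset.sum_nonneg fun j _ => ?_
  unfold kappa
  split_ifs <;> simp

lemma sum_birk_apply (s : Seq3) (N : ℕ) : ∑ i, birk s N i = N := by
  simp only [birk, Finset.sum_apply, kappa]
  rw [Finset.sum_comm]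
  simp

lemma birk_succ (s : Seq3) (N : ℕ) : birk s (N + 1) = birk s N + Pi.single (s N) 1 := by
  rw [birk, Finset.sum_range_succ, ← birk]
  congr 1
  ext i
  simp [kappa, shift_iterate_apply, Pi.single_apply]

lemma birk_add (s : Seq3) (k N : ℕ) : birk s (k + N) = birk s k + birk (shift^[k] s) N :=
  birkhoffSum_add shift kappa k N s

lemma mem_Delta_iff_mem_stdSimplex {v : Fin 3 → ℝ} : v ∈ Delta ↔ v ∈ stdSimplex ℝ (Fin 3) := by
  simp only [Delta, stdSimplex, Set.mem_ofPred_eq, Fin.sum_univ_three]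

lemma isCompact_Delta : IsCompact Delta := by
  rw [show Delta = stdSimplex ℝ (Fin 3) from Set.ext fun _ => mem_Delta_iff_mem_stdSimplex]
  exact isCompact_stdSimplex ℝ (Fin 3)

lemma sum_eq_one_of_mem_Delta {v : Fin 3 → ℝ} (hv : v ∈ Delta) : ∑ i, v i = 1 :=
  (mem_Delta_iff_mem_stdSimplex.1 hv).2

lemma inv_smul_birk_mem_Delta (s : Seq3) {N : ℕ} (hN : N ≠ 0) : (N : ℝ)⁻¹ • birk s N ∈ Delta := by
  refine mem_Delta_iff_mem_stdSimplex.2 ⟨fun i => ?_, ?_⟩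
  · exact mul_nonneg (by positivity) (birk_apply_nonneg s N i)
  · simp only [Pi.smul_apply, smul_eq_mul, ← Finset.mul_sum, sum_birk_apply]
    exact inv_mul_cancel₀ (Nat.cast_ne_zero.2 hN)

lemma DFMZ_subset_Delta (X : Set Seq3) : DFMZ X ⊆ Delta := by
  rintro v ⟨s, r, -, hr, hv⟩
  refine isCompact_Delta.isClosed.mem_of_tendsto hv ?_
  filter_upwards [hr.eventually_ne_atTop 0] with i hi using inv_smul_birk_mem_Delta _ hi

lemma mem_DFMZ_of_hasFreq {s : Seq3} {v : Fin 3 → ℝ} (h : hasFreq s v) {X : Set Seq3}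
    (hs : s ∈ X) : v ∈ DFMZ X :=
  ⟨fun _ => s, id, fun _ => hs, tendsto_id, h⟩

/-- Every point of `X` has digit frequency `v`, with uniform convergence of the averages. -/
def HasUniformFreq (X : Set Seq3) (v : Fin 3 → ℝ) : Prop :=
  TendstoUniformlyOn (birkhoffAverage ℝ shift kappa) (fun _ => v) atTop X

namespace HasUniformFreq

variable {X : Set Seq3} {v : Fin 3 → ℝ}

lemma hasFreq (h : HasUniformFreq X v) {s : Seq3} (hs : s ∈ X) : hasFreq s v :=
  h.tendsto_at hs

lemma closure (h : HasUniformFreq X v) : HasUniformFreq (closure X) v :=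
  tendstoUniformlyOn_closure h (continuous_birkhoffAverage continuous_shift continuous_kappa)
    continuous_const

lemma of_DFMZ_subset (h : DFMZ X ⊆ {v}) : HasUniformFreq X v := by
  by_contra hnot
  simp only [HasUniformFreq, Metric.tendstoUniformlyOn_iff, not_forall, not_eventually] at hnot
  obtain ⟨ε, hε, hfreq⟩ := hnot
  choose N hN s hsX hfar using fun m => (frequently_atTop.1 hfreq (m + 1))
  obtain ⟨u, -, φ, hφ, hu⟩ := isCompact_Delta.tendsto_subseq
    (x := fun m => birkhoffAverage ℝ shift kappa (N m) (s m))
    fun m => inv_smul_birk_mem_Delta _ (by have := hN m; omega)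
  have hNφ : Tendsto (N ∘ φ) atTop atTop :=
    (tendsto_atTop_mono (fun m => (m.le_succ.trans (hN m))) tendsto_id).comp hφ.tendsto_atTop
  obtain rfl : u = v := h ⟨s ∘ φ, N ∘ φ, fun m => hsX _, hNφ, hu⟩
  obtain ⟨m, hm⟩ := ((Metric.tendsto_nhds.1 hu ε hε)).exists
  exact hfar (φ m) (by rwa [dist_comm])

end HasUniformFreq

end Frequency

section Normalization

/-- The rescaling of `x` to coordinate sum `1`; junk when the coordinates of `x` sum to `0`. -/
noncomputable def normalizeSum (x : Fin 3 → ℝ) : Fin 3 → ℝ := (∑ i, x i)⁻¹ • x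

lemma sum_smul_apply (c : ℝ) (x : Fin 3 → ℝ) : ∑ i, (c • x) i = c * ∑ i, x i := by
  simp [Finset.mul_sum]

lemma normalizeSum_smul {c : ℝ} (hc : c ≠ 0) (x : Fin 3 → ℝ) :
    normalizeSum (c • x) = normalizeSum x := by
  rw [normalizeSum, sum_smul_apply, smul_smul, mul_inv_rev, inv_mul_cancel_right₀ hc, normalizeSum]

lemma normalizeSum_of_sum_eq_one {x : Fin 3 → ℝ} (hx : ∑ i, x i = 1) : normalizeSum x = x := by
  rw [normalizeSum, hx, inv_one, one_smul]

lemma normalizeSum_birk (s : Seq3) (N : ℕ) : normalizeSum (birk s N) = (N : ℝ)⁻¹ • birk s N := by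
  rw [normalizeSum, sum_birk_apply]

lemma normalizeSum_mem_Delta {x : Fin 3 → ℝ} (hx : ∀ i, 0 ≤ x i) (hpos : 0 < ∑ i, x i) :
    normalizeSum x ∈ Delta := by
  refine mem_Delta_iff_mem_stdSimplex.2 ⟨fun i => mul_nonneg (by positivity) (hx i), ?_⟩
  rw [normalizeSum, sum_smul_apply, inv_mul_cancel₀ hpos.ne']

lemma tendsto_normalizeSum {ι : Type*} {l : Filter ι} {c : ι → ℝ} {x : ι → Fin 3 → ℝ}
    {y : Fin 3 → ℝ} (hy : ∑ i, y i ≠ 0) (hc : ∀ᶠ j in l, c j ≠ 0)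
    (h : Tendsto (fun j => (c j)⁻¹ • x j) l (𝓝 y)) :
    Tendsto (fun j => normalizeSum (x j)) l (𝓝 (normalizeSum y)) := by
  have hcont : ContinuousAt normalizeSum y := by
    unfold normalizeSum
    fun_prop (disch := assumption)
  refine (hcont.tendsto.comp h).congr' ?_
  filter_upwards [hc] with j hj using normalizeSum_smul (inv_ne_zero hj) _

end Normalization

section BoundedDiscrepancy

lemma tendstoUniformlyOn_birkhoffAverage_of_bounded {X E : Type*} [SeminormedAddCommGroup E]
    [NormedSpace ℝ E] {T : X → X} {f : X → E} {S : Set X} {c : E} {B : ℝ}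
    (h : ∀ x ∈ S, ∀ N : ℕ, ‖birkhoffSum T f N x - (N : ℝ) • c‖ ≤ B) :
    TendstoUniformlyOn (birkhoffAverage ℝ T f) (fun _ => c) atTop S := by
  rw [Metric.tendstoUniformlyOn_iff]
  intro ε hε
  have hlim : Tendsto (fun N : ℕ => B / N) atTop (𝓝 0) :=
    tendsto_const_nhds.div_atTop tendsto_natCast_atTop_atTop
  filter_upwards [hlim.eventually_lt_const hε, eventually_gt_atTop 0] with N hN hN0 x hx
  have hN0 : (0 : ℝ) < N := Nat.cast_pos.2 hN0
  have hscale : birkhoffAverage ℝ T f N x - c =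
      (N : ℝ)⁻¹ • (birkhoffSum T f N x - (N : ℝ) • c) := by
    rw [smul_sub, inv_smul_smul₀ hN0.ne', birkhoffAverage]
  rw [dist_comm, dist_eq_norm, hscale, norm_smul, norm_inv, Real.norm_natCast]
  refine lt_of_le_of_lt ?_ hN
  rw [div_eq_inv_mul]
  gcongr
  exact h x hx N

-- Greedy choice: the next digit is one whose accumulated deficit is nonnegative.
lemma exists_seq_birk_le_add_one {α : Fin 3 → ℝ} (hα : α ∈ Delta) :
    ∃ s : Seq3, ∀ N i, birk s N i ≤ N * α i + 1 := by
  have hpick : ∀ x : Fin 3 → ℝ, ∑ i, x i = 0 → ∃ i, 0 ≤ x i + α i := fun x hx => by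
    by_contra! hneg
    have hsum : ∑ i, (x i + α i) < 0 := Finset.sum_neg (fun i _ => hneg i) Finset.univ_nonempty
    rw [Finset.sum_add_distrib, hx, sum_eq_one_of_mem_Delta hα] at hsum
    linarith
  choose! pick hpick using hpick
  let deficit : ℕ → Fin 3 → ℝ :=
    fun N => Nat.rec 0 (fun _ x => x + α - Pi.single (pick x) 1) N
  let s : Seq3 := fun k => pick (deficit k)
  have hdef : ∀ N, deficit N = (N : ℝ) • α - birk s N := fun N => by
    induction N with
    | zero => simp [deficit, birk]
    | succ N ih =>
      rw [birk_succ, Nat.cast_succ, add_smul, one_smul, ← sub_sub, add_sub_right_comm, ← ih]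
  have hsum : ∀ N, ∑ i, deficit N i = 0 := fun N => by
    simp only [hdef, Pi.sub_apply, Finset.sum_sub_distrib, sum_smul_apply,
      sum_eq_one_of_mem_Delta hα, sum_birk_apply, mul_one, sub_self]
  have hlow : ∀ N i, -1 ≤ deficit N i := fun N => by
    induction N with
    | zero => exact fun _ => by simp [deficit]
    | succ N ih =>
      intro i
      change -1 ≤ deficit N i + α i - (Pi.single (pick (deficit N)) 1 : Fin 3 → ℝ) i
      rcases eq_or_ne i (pick (deficit N)) with rfl | hne
      · rw [Pi.single_eq_same]
        linarith [hpick _ (hsum N)]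
      · rw [Pi.single_eq_of_ne hne]
        linarith [ih i, hα.1 i]
  refine ⟨s, fun N i => ?_⟩
  have := hlow N i
  rw [hdef, Pi.sub_apply, Pi.smul_apply, smul_eq_mul] at this
  linarith

lemma exists_hasUniformFreq_forwardOrbit {α : Fin 3 → ℝ} (hα : α ∈ Delta) :
    ∃ s, HasUniformFreq (forwardOrbit s) α := by
  obtain ⟨s, hs⟩ := exists_seq_birk_le_add_one hα
  have hdisc : ∀ N, ‖birk s N - (N : ℝ) • α‖ ≤ 2 := fun N => by
    rw [pi_norm_le_iff_of_nonneg zero_le_two]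
    have hsum := sum_birk_apply s N
    have hα1 := sum_eq_one_of_mem_Delta hα
    rw [Fin.sum_univ_three] at hsum hα1
    have hlow : ∀ i, (N : ℝ) * α i - 2 ≤ birk s N i := fun i => by
      have : (N : ℝ) * α 0 + N * α 1 + N * α 2 = N := by rw [← mul_add, ← mul_add, hα1, mul_one]
      fin_cases i <;> simp <;> linarith [hs N 0, hs N 1, hs N 2]
    intro i
    rw [Pi.sub_apply, Pi.smul_apply, smul_eq_mul, Real.norm_eq_abs, abs_le]
    constructor <;> linarith [hs N i, hlow i]
  refine ⟨s, tendstoUniformlyOn_birkhoffAverage_of_bounded (B := 4) ?_⟩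
  rintro _ ⟨k, rfl⟩ N
  have hsplit : birk (shift^[k] s) N - (N : ℝ) • α =
      (birk s (k + N) - ((k + N : ℕ) : ℝ) • α) - (birk s k - (k : ℝ) • α) := by
    rw [birk_add, Nat.cast_add, add_smul]
    abel
  calc ‖birk (shift^[k] s) N - (N : ℝ) • α‖
      ≤ ‖birk s (k + N) - ((k + N : ℕ) : ℝ) • α‖ + ‖birk s k - (k : ℝ) • α‖ :=
        hsplit ▸ norm_sub_le _ _
    _ ≤ 4 := by linarith [hdisc (k + N), hdisc k]

lemma exists_apply_eq_of_hasFreq {s : Seq3} {v : Fin 3 → ℝ} {d : Fin 3} (h : hasFreq s v)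
    (hd : v d ≠ 0) : ∃ k, s k = d := by
  by_contra! hne
  have hzero : ∀ N : ℕ, ((N : ℝ)⁻¹ • birk s N) d = 0 := fun N => by
    simp [birk, kappa, shift_iterate_apply, (hne _).symm]
  have hlim := tendsto_pi_nhds.1 h d
  simp only [hzero] at hlim
  exact hd (tendsto_nhds_unique hlim tendsto_const_nhds)

lemma lexLe.head_le {s t : Seq3} (h : lexLe s t) : s 0 ≤ t 0 := by
  rcases h with rfl | ⟨_ | n, heq, hlt⟩
  · exact le_rfl
  · exact hlt.le
  · exact (heq 0 n.succ_pos).le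

-- The lexicographically greatest point of a shift-invariant set is maximal.
lemma exists_mem_MaxSet_hasFreq {α : Fin 3 → ℝ} (hα : α ∈ Delta') :
    ∃ w ∈ MaxSet, hasFreq w α := by
  obtain ⟨s, hs⟩ := exists_hasUniformFreq_forwardOrbit hα.1
  obtain ⟨w, hw, hmax⟩ := exists_lexLe_greatest (K := orbitClosure s) isClosed_closure.isCompact
    ⟨s, self_mem_orbitClosure s⟩
  have hmax : ∀ r, lexLe (shift^[r] w) w := fun r =>
    hmax _ ((mapsTo_shift_orbitClosure s).iterate r hw)
  have hfreq : hasFreq w α := hs.closure.hasFreq hw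
  obtain ⟨k, hk⟩ := exists_apply_eq_of_hasFreq hfreq hα.2.ne'
  have htwo : 2 ≤ w 0 := by
    simpa only [shift_iterate_apply, add_zero, hk] using (hmax k).head_le
  exact ⟨w, ⟨le_antisymm (Fin.le_last _) htwo, hmax⟩, hfreq⟩

end BoundedDiscrepancy

section Concatenation

/-- The concatenation `w (x 0) ++ ⋯ ++ w (x (k - 1))` of the first `k` blocks. -/
def blockPrefix (w : Fin 3 → List (Fin 3)) (x : Seq3) (k : ℕ) : List (Fin 3) :=
  (List.range k).flatMap fun i => w (x i)

/-- The position at which the `k`-th block starts. -/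
def blockPos (w : Fin 3 → List (Fin 3)) (x : Seq3) (k : ℕ) : ℕ := (blockPrefix w x k).length

/-- The image `w (x 0) ++ w (x 1) ++ ⋯` of `x` under the substitution `w`, provided that no `w d`
is empty: the first `m + 1` blocks then suffice to read off the digit with index `m`. -/
def concat (w : Fin 3 → List (Fin 3)) (x : Seq3) : Seq3 :=
  fun m => (blockPrefix w x (m + 1)).getD m 0

variable {w v : Fin 3 → List (Fin 3)} {x y : Seq3}

lemma blockPrefix_succ (w : Fin 3 → List (Fin 3)) (x : Seq3) (k : ℕ) :
    blockPrefix w x (k + 1) = blockPrefix w x k ++ w (x k) := by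
  simp [blockPrefix, List.range_succ]

lemma blockPrefix_add (w : Fin 3 → List (Fin 3)) (x : Seq3) (k j : ℕ) :
    blockPrefix w x (k + j) = blockPrefix w x k ++ blockPrefix w (shift^[k] x) j := by
  induction j with
  | zero => simp [blockPrefix]
  | succ j ih => rw [← add_assoc, blockPrefix_succ, ih, blockPrefix_succ, shift_iterate_apply,
      List.append_assoc]

lemma blockPrefix_congr {k : ℕ} (h : ∀ i < k, x i = y i) :
    blockPrefix w x k = blockPrefix w y k := by
  induction k with
  | zero => rfl
  | succ k ih =>
    rw [blockPrefix_succ, blockPrefix_succ, ih fun i hi => h i (by omega), h k (by omega)]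

lemma blockPos_zero (w : Fin 3 → List (Fin 3)) (x : Seq3) : blockPos w x 0 = 0 := rfl

lemma blockPos_succ (w : Fin 3 → List (Fin 3)) (x : Seq3) (k : ℕ) :
    blockPos w x (k + 1) = blockPos w x k + (w (x k)).length := by
  rw [blockPos, blockPrefix_succ, List.length_append, ← blockPos]

lemma blockPos_add (w : Fin 3 → List (Fin 3)) (x : Seq3) (k j : ℕ) :
    blockPos w x (k + j) = blockPos w x k + blockPos w (shift^[k] x) j := by
  rw [blockPos, blockPrefix_add, List.length_append, ← blockPos, ← blockPos]

lemma le_blockPos (hw : ∀ d, w d ≠ []) (x : Seq3) (k : ℕ) : k ≤ blockPos w x k := by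
  induction k with
  | zero => exact Nat.zero_le _
  | succ k ih =>
    have := List.length_pos_iff.2 (hw (x k))
    rw [blockPos_succ]
    omega

lemma getD_blockPrefix_of_le {k j m : ℕ} (hkj : k ≤ j) (hm : m < blockPos w x k) :
    (blockPrefix w x j).getD m 0 = (blockPrefix w x k).getD m 0 := by
  obtain ⟨j, rfl⟩ := Nat.exists_eq_add_of_le hkj
  rw [blockPrefix_add, List.getD_append _ _ _ _ hm]

lemma concat_apply (hw : ∀ d, w d ≠ []) {k m : ℕ} (hm : m < blockPos w x k) :
    concat w x m = (blockPrefix w x k).getD m 0 := by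
  rcases le_total k (m + 1) with h | h
  · exact getD_blockPrefix_of_le h hm
  · exact (getD_blockPrefix_of_le h (le_blockPos hw x (m + 1))).symm

lemma concat_congr (hw : ∀ d, w d ≠ []) {k m : ℕ} (h : ∀ i < k, x i = y i)
    (hm : m < blockPos w x k) : concat w x m = concat w y m := by
  have hprefix : blockPrefix w x k = blockPrefix w y k := blockPrefix_congr h
  rw [concat_apply hw hm, hprefix, concat_apply hw (by rwa [blockPos, ← hprefix])]

lemma concat_blockPos_add (hw : ∀ d, w d ≠ []) {k j : ℕ} (hj : j < (w (x k)).length) :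
    concat w x (blockPos w x k + j) = (w (x k)).getD j 0 := by
  rw [concat_apply hw (k := k + 1) (by rw [blockPos_succ]; omega), blockPrefix_succ,
    blockPos, List.getD_append_right _ _ _ _ (Nat.le_add_right _ _), Nat.add_sub_cancel_left]

lemma map_range_concat (hw : ∀ d, w d ≠ []) (x : Seq3) (k : ℕ) :
    (List.range (blockPos w x k)).map (concat w x) = blockPrefix w x k := by
  refine List.ext_getElem (by simp [blockPos]) fun m _ hm => ?_
  rw [List.getElem_map, List.getElem_range, concat_apply hw hm, List.getD_eq_getElem]

lemma shift_iterate_concat (hw : ∀ d, w d ≠ []) (x : Seq3) (k : ℕ) :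
    shift^[blockPos w x k] (concat w x) = concat w (shift^[k] x) := by
  ext1 m
  have hm : m < blockPos w (shift^[k] x) (m + 1) := le_blockPos hw _ _
  rw [shift_iterate_apply, concat_apply hw (k := k + (m + 1)) (by rw [blockPos_add]; omega),
    concat_apply hw hm, blockPrefix_add, blockPos,
    List.getD_append_right _ _ _ _ (Nat.le_add_right _ _), Nat.add_sub_cancel_left]

lemma blockPrefix_concat (hv : ∀ d, v d ≠ []) (x : Seq3) (k : ℕ) :
    blockPrefix w (concat v x) (blockPos v x k) = blockPrefix (fun d => (v d).flatMap w) x k := by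
  calc blockPrefix w (concat v x) (blockPos v x k)
      = ((List.range (blockPos v x k)).map (concat v x)).flatMap w := (List.flatMap_map ..).symm
    _ = blockPrefix (fun d => (v d).flatMap w) x k := by
      rw [map_range_concat hv, blockPrefix, List.flatMap_assoc, blockPrefix]

lemma flatMap_ne_nil {l : List (Fin 3)} (hl : l ≠ []) (hw : ∀ d, w d ≠ []) : l.flatMap w ≠ [] := by
  obtain ⟨d, l, rfl⟩ := List.exists_cons_of_ne_nil hl
  simp [hw d]

lemma concat_concat (hw : ∀ d, w d ≠ []) (hv : ∀ d, v d ≠ []) (x : Seq3) :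
    concat w (concat v x) = concat (fun d => (v d).flatMap w) x := by
  ext1 m
  have hm : m < blockPos w (concat v x) (blockPos v x (m + 1)) :=
    (le_blockPos hv x (m + 1)).trans (le_blockPos hw _ _)
  rw [concat_apply hw hm, blockPrefix_concat hv, concat]

lemma concat_singleton (x : Seq3) : concat (fun d => [d]) x = x := by
  have hprefix : ∀ k, blockPrefix (fun d => [d]) x k = (List.range k).map x := fun k => by
    rw [blockPrefix, ← List.map_eq_flatMap]
  ext1 m
  rw [concat, hprefix, List.getD_eq_getElem _ _ (by simp), List.getElem_map, List.getElem_range]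

lemma exists_block_index (hw : ∀ d, w d ≠ []) (x : Seq3) (m : ℕ) :
    ∃ k, blockPos w x k ≤ m ∧ m < blockPos w x (k + 1) := by
  have hex : ∃ k, m < blockPos w x k := ⟨m + 1, le_blockPos hw x (m + 1)⟩
  have hpos : Nat.find hex ≠ 0 := fun h => by simpa [h, blockPos_zero] using Nat.find_spec hex
  obtain ⟨k, hk⟩ := Nat.exists_eq_succ_of_ne_zero hpos
  exact ⟨k, not_lt.1 (Nat.find_min hex (by omega)), by simpa only [hk] using Nat.find_spec hex⟩

/-- The maximal length of the words `w d`. -/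
def maxBlockLength (w : Fin 3 → List (Fin 3)) : ℕ := Finset.univ.sup fun d => (w d).length

lemma length_le_maxBlockLength (w : Fin 3 → List (Fin 3)) (d : Fin 3) :
    (w d).length ≤ maxBlockLength w :=
  Finset.le_sup (f := fun d => (w d).length) (Finset.mem_univ d)

lemma blockPos_le_mul (w : Fin 3 → List (Fin 3)) (x : Seq3) (k : ℕ) :
    blockPos w x k ≤ k * maxBlockLength w := by
  induction k with
  | zero => simp [blockPos_zero]
  | succ k ih =>
    rw [blockPos_succ, add_one_mul]
    exact add_le_add ih (length_le_maxBlockLength w _)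

end Concatenation

section LetterCount

/-- The number of occurrences of each digit in a word. -/
noncomputable def letterCount (l : List (Fin 3)) : Fin 3 → ℝ :=
  (l.map fun d => (Pi.single d 1 : Fin 3 → ℝ)).sum

/-- The incidence map of the substitution `w`: it sends the digit counts of a word to those of its
image. -/
noncomputable def abelianization (w : Fin 3 → List (Fin 3)) : (Fin 3 → ℝ) →ₗ[ℝ] (Fin 3 → ℝ) :=
  Fintype.linearCombination ℝ fun d => letterCount (w d)

variable {w : Fin 3 → List (Fin 3)}

lemma letterCount_append (l l' : List (Fin 3)) :
    letterCount (l ++ l') = letterCount l + letterCount l' := by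
  simp [letterCount]

lemma sum_letterCount (l : List (Fin 3)) : ∑ i, letterCount l i = l.length := by
  induction l with
  | nil => simp [letterCount]
  | cons d l ih =>
    have hcons : letterCount (d :: l) = Pi.single d 1 + letterCount l := by simp [letterCount]
    simp [hcons, Finset.sum_add_distrib, ih, add_comm]

lemma birk_eq_letterCount (s : Seq3) (N : ℕ) : birk s N = letterCount ((List.range N).map s) := by
  induction N with
  | zero => simp [birk, letterCount]
  | succ N ih =>
    rw [birk_succ, List.range_succ, List.map_append, letterCount_append, ih]
    simp [letterCount]

lemma birk_congr {s t : Seq3} {N : ℕ} (h : ∀ i < N, s i = t i) : birk s N = birk t N := by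
  rw [birk_eq_letterCount, birk_eq_letterCount,
    List.map_congr_left fun i hi => h i (List.mem_range.1 hi)]

lemma abelianization_birk (hw : ∀ d, w d ≠ []) (x : Seq3) (k : ℕ) :
    birk (concat w x) (blockPos w x k) = abelianization w (birk x k) := by
  rw [birk_eq_letterCount, map_range_concat hw]
  induction k with
  | zero => simp [blockPrefix, letterCount, birk]
  | succ k ih =>
    rw [blockPrefix_succ, letterCount_append, birk_succ, map_add, ih, abelianization,
      Fintype.linearCombination_apply_single, one_smul]

lemma sum_abelianization (w : Fin 3 → List (Fin 3)) (u : Fin 3 → ℝ) :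
    ∑ i, abelianization w u i = ∑ d, u d * (w d).length := by
  simp only [abelianization, Fintype.linearCombination_apply, Finset.sum_apply, Pi.smul_apply,
    smul_eq_mul]
  rw [Finset.sum_comm]
  simp only [← Finset.mul_sum, sum_letterCount]

lemma one_le_sum_abelianization (hw : ∀ d, w d ≠ []) {u : Fin 3 → ℝ} (hu : u ∈ Delta) :
    1 ≤ ∑ i, abelianization w u i := by
  rw [sum_abelianization, ← sum_eq_one_of_mem_Delta hu]
  refine Finset.sum_le_sum fun d _ => le_mul_of_one_le_right (hu.1 d) ?_
  exact_mod_cast List.length_pos_iff.2 (hw d)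

end LetterCount

section BlockWindow

/-- Up to at most `maxBlockLength w` digits at either end, the first `N` digits of `y` are the
concatenation of the first `r` blocks of `concat w x`. -/
def IsBlockWindow (w : Fin 3 → List (Fin 3)) (y : Seq3) (N : ℕ) (x : Seq3) (r : ℕ) : Prop :=
  ∃ o ≤ maxBlockLength w, y = shift^[o] (concat w x) ∧
    blockPos w x r ≤ N ∧ N ≤ blockPos w x r + maxBlockLength w

variable {w : Fin 3 → List (Fin 3)} {x y : Seq3} {N r : ℕ}

lemma exists_isBlockWindow_concat (hw : ∀ d, w d ≠ []) (x : Seq3) (N : ℕ) :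
    ∃ r, IsBlockWindow w (concat w x) N x r := by
  obtain ⟨r, hle, hlt⟩ := exists_block_index hw x N
  refine ⟨r, 0, Nat.zero_le _, rfl, hle, hlt.le.trans ?_⟩
  rw [blockPos_succ]
  exact Nat.add_le_add_left (length_le_maxBlockLength w _) _

lemma exists_isBlockWindow (hw : ∀ d, w d ≠ []) (hy : y ∈ forwardOrbit (concat w x)) (N : ℕ) :
    ∃ x' ∈ forwardOrbit x, ∃ r, IsBlockWindow w y N x' r := by
  obtain ⟨p, rfl⟩ := hy
  obtain ⟨k, hle, hlt⟩ := exists_block_index hw x p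
  obtain ⟨r, -, -, -, hr⟩ := exists_isBlockWindow_concat hw (shift^[k] x) N
  refine ⟨_, ⟨k, rfl⟩, r, p - blockPos w x k, ?_, ?_, hr⟩
  · have := length_le_maxBlockLength w (x k)
    rw [blockPos_succ] at hlt
    omega
  · rw [← shift_iterate_concat hw, ← Function.iterate_add_apply, Nat.sub_add_cancel hle]

namespace IsBlockWindow

lemma norm_birkhoffSum_sub_le {E : Type*} [SeminormedAddCommGroup E] {f : Seq3 → E} {B : ℝ}
    (h : IsBlockWindow w y N x r) (hf : ∀ s, ‖f s‖ ≤ B) :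
    ‖birkhoffSum shift f N y - birkhoffSum shift f (blockPos w x r) (concat w x)‖ ≤
      3 * maxBlockLength w * B := by
  obtain ⟨o, ho, rfl, hle, hge⟩ := h
  exact norm_birkhoffSum_iterate_sub_le hf ho hle hge _

lemma le_mul (h : IsBlockWindow w y N x r) : N ≤ (r + 1) * maxBlockLength w := by
  obtain ⟨-, -, -, -, hge⟩ := h
  rw [add_one_mul]
  exact hge.trans (Nat.add_le_add_right (blockPos_le_mul w x r) _)

lemma le (hw : ∀ d, w d ≠ []) (h : IsBlockWindow w y N x r) : r ≤ N := by
  obtain ⟨-, -, -, hle, -⟩ := h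
  exact (le_blockPos hw x r).trans hle

variable {ι : Type*} {l : Filter ι} {N r : ι → ℕ} {x y : ι → Seq3}

lemma tendsto_atTop (h : ∀ i, IsBlockWindow w (y i) (N i) (x i) (r i))
    (hN : Tendsto N l atTop) : Tendsto r l atTop := by
  refine Filter.tendsto_atTop.2 fun M => ?_
  filter_upwards [hN.eventually_gt_atTop (M * maxBlockLength w)] with i hi
  have := lt_of_mul_lt_mul_right (hi.trans_le (h i).le_mul) (Nat.zero_le _)
  omega

lemma tendsto_normalizeSum_birk (hw : ∀ d, w d ≠ [])
    (h : ∀ i, IsBlockWindow w (y i) (N i) (x i) (r i)) (hN : Tendsto N l atTop)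
    {u : Fin 3 → ℝ} (hu : u ∈ Delta)
    (hlim : Tendsto (fun i => (r i : ℝ)⁻¹ • birk (x i) (r i)) l (𝓝 u)) :
    Tendsto (fun i => normalizeSum (birk (y i) (N i))) l
      (𝓝 (normalizeSum (abelianization w u))) := by
  have hr : Tendsto (fun i => (r i : ℝ)) l atTop :=
    tendsto_natCast_atTop_atTop.comp (tendsto_atTop h hN)
  refine tendsto_normalizeSum (one_le_sum_abelianization hw hu |>.trans_lt' one_pos).ne'
    (hr.eventually_ne_atTop 0) ?_
  have hmain : Tendsto (fun i => abelianization w ((r i : ℝ)⁻¹ • birk (x i) (r i))) l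
      (𝓝 (abelianization w u)) :=
    ((abelianization w).continuous_of_finiteDimensional.tendsto u).comp hlim
  have herr : Tendsto (fun i => (r i : ℝ)⁻¹ •
      (birk (y i) (N i) - birk (concat w (x i)) (blockPos w (x i) (r i)))) l (𝓝 0) :=
    hr.inv_tendsto_atTop.zero_smul_isBoundedUnder_le
      (isBoundedUnder_of ⟨_, fun i => (h i).norm_birkhoffSum_sub_le norm_kappa_le⟩)
  simpa only [abelianization_birk hw, map_smul, ← smul_add, add_sub_cancel, add_zero] using
    hmain.add herr

end IsBlockWindow

variable {t : Seq3} {u v : Fin 3 → ℝ}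

lemma hasFreq.mem_Delta (h : hasFreq t v) : v ∈ Delta :=
  DFMZ_subset_Delta _ (mem_DFMZ_of_hasFreq h (Set.mem_univ t))

lemma hasFreq_concat (hw : ∀ d, w d ≠ []) (h : hasFreq t u) :
    hasFreq (concat w t) (normalizeSum (abelianization w u)) := by
  choose r hr using exists_isBlockWindow_concat hw t
  refine (IsBlockWindow.tendsto_normalizeSum_birk hw hr tendsto_id h.mem_Delta
    (h.comp (IsBlockWindow.tendsto_atTop hr tendsto_id))).congr fun N => normalizeSum_birk _ _

lemma exists_of_mem_DFMZ_concat (hw : ∀ d, w d ≠ []) (hv : v ∈ DFMZ (forwardOrbit (concat w t))) :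
    ∃ u ∈ DFMZ (forwardOrbit t), v = normalizeSum (abelianization w u) := by
  obtain ⟨y, N, hy, hN, hv⟩ := hv
  choose x hx r hr using fun i => exists_isBlockWindow hw (hy i) (N i)
  have hrtop := IsBlockWindow.tendsto_atTop hr hN
  obtain ⟨u, hu, φ, hφ, hlim⟩ := isCompact_Delta.tendsto_subseq'
    (x := fun i => (r i : ℝ)⁻¹ • birk (x i) (r i)) <| Eventually.frequently <| by
      filter_upwards [hrtop.eventually_ne_atTop 0] with i hi using inv_smul_birk_mem_Delta _ hi
  refine ⟨u, ⟨x ∘ φ, r ∘ φ, fun i => hx _, hrtop.comp hφ.tendsto_atTop, hlim⟩, ?_⟩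
  refine tendsto_nhds_unique ((hv.comp hφ.tendsto_atTop).congr fun i => ?_)
    (IsBlockWindow.tendsto_normalizeSum_birk hw (fun i => hr (φ i)) (hN.comp hφ.tendsto_atTop)
      hu hlim)
  exact (normalizeSum_birk _ _).symm

end BlockWindow

section Lambda

/-- The substitution `Λ_n`: `0 ↦ 1`, `1 ↦ 2 0ⁿ⁺¹`, `2 ↦ 2 0ⁿ`. -/
def lambdaWord (n : ℕ) : Fin 3 → List (Fin 3) :=
  ![[1], 2 :: List.replicate (n + 1) 0, 2 :: List.replicate n 0]

variable {n : ℕ} {x y : Seq3}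

lemma lambdaWord_ne_nil (n : ℕ) (d : Fin 3) : lambdaWord n d ≠ [] := by
  fin_cases d <;> simp [lambdaWord]

lemma concat_lambdaWord_blockPos (n : ℕ) (x : Seq3) (k : ℕ) :
    concat (lambdaWord n) x (blockPos (lambdaWord n) x k) = ![1, 2, 2] (x k) := by
  have hhead : ∀ d, (lambdaWord n d).getD 0 0 = ![1, 2, 2] d := fun d => by
    fin_cases d <;> simp [lambdaWord]
  rw [← hhead]
  exact concat_blockPos_add (lambdaWord_ne_nil n) (List.length_pos_iff.2 (lambdaWord_ne_nil n _))

lemma concat_lambdaWord_blockPos_add {k j : ℕ} (hj : j + 1 < (lambdaWord n (x k)).length) :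
    concat (lambdaWord n) x (blockPos (lambdaWord n) x k + (j + 1)) = 0 := by
  rw [concat_blockPos_add (lambdaWord_ne_nil n) hj]
  generalize x k = d
  fin_cases d
  · rfl
  all_goals exact List.getElem?_getD_replicate_default_eq ..

lemma concat_lambdaWord_blockPos_ne_zero (n : ℕ) (x : Seq3) (k : ℕ) :
    concat (lambdaWord n) x (blockPos (lambdaWord n) x k) ≠ 0 := by
  rw [concat_lambdaWord_blockPos]
  generalize x k = d
  fin_cases d <;> decide

lemma exists_blockPos_eq_of_concat_lambdaWord_ne_zero {m : ℕ}
    (h : concat (lambdaWord n) x m ≠ 0) : ∃ k, blockPos (lambdaWord n) x k = m := by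
  obtain ⟨k, hle, hlt⟩ := exists_block_index (lambdaWord_ne_nil n) x m
  obtain ⟨_ | j, rfl⟩ := Nat.exists_eq_add_of_le hle
  · exact ⟨k, rfl⟩
  · rw [blockPos_succ] at hlt
    exact absurd (concat_lambdaWord_blockPos_add (by omega)) h

lemma concat_lambdaWord_head (h : x 0 ≠ 0) : concat (lambdaWord n) x 0 = 2 := by
  have := concat_lambdaWord_blockPos n x 0
  rw [blockPos_zero] at this
  rw [this]
  generalize x 0 = d at h ⊢
  fin_cases d <;> simp_all

lemma lexLe_concat_lambdaWord (n : ℕ) (h : lexLe x y) :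
    lexLe (concat (lambdaWord n) x) (concat (lambdaWord n) y) := by
  rcases h with rfl | ⟨k, heq, hlt⟩
  · exact lexLe.refl _
  have hprefix : ∀ m < blockPos (lambdaWord n) x k,
      concat (lambdaWord n) x m = concat (lambdaWord n) y m := fun m hm =>
    concat_congr (lambdaWord_ne_nil n) heq hm
  have hpos : blockPos (lambdaWord n) x k = blockPos (lambdaWord n) y k :=
    congrArg List.length (blockPrefix_congr heq)
  have hx := concat_lambdaWord_blockPos n x k
  have hy := concat_lambdaWord_blockPos n y k
  rw [← hpos] at hy
  rcases eq_or_ne (x k) 0 with hx0 | hx0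
  · refine Or.inr ⟨_, hprefix, ?_⟩
    rw [hx, hy]
    generalize y k = e at *
    fin_cases e <;> simp_all
  · have hxk : x k = 1 := by omega
    have hyk : y k = 2 := by omega
    have hzero : ∀ j ≤ n, concat (lambdaWord n) x (blockPos (lambdaWord n) x k + (j + 1)) = 0 :=
      fun j hj => concat_lambdaWord_blockPos_add (by simp [hxk, lambdaWord]; omega)
    refine Or.inr ⟨blockPos (lambdaWord n) x k + (n + 1), fun m hm => ?_, ?_⟩
    · rcases lt_or_ge m (blockPos (lambdaWord n) x k) with h | h
      · exact hprefix m h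
      obtain ⟨_ | j, rfl⟩ := Nat.exists_eq_add_of_le h
      · rw [add_zero, hx, hy, hxk, hyk]
        rfl
      · rw [hzero j (by omega), hpos]
        exact (concat_lambdaWord_blockPos_add (by simp [hyk, lambdaWord]; omega)).symm
    · have hnext := concat_lambdaWord_blockPos_ne_zero n y (k + 1)
      rw [blockPos_succ, hyk, ← hpos] at hnext
      rw [hzero n le_rfl]
      exact Fin.pos_iff_ne_zero.2 (by simpa [lambdaWord] using hnext)

lemma concat_lambdaWord_mem_MaxSet (n : ℕ) (hx : x ∈ MaxSet) :
    concat (lambdaWord n) x ∈ MaxSet := by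
  have hhead : concat (lambdaWord n) x 0 = 2 := concat_lambdaWord_head (by rw [hx.1]; decide)
  refine ⟨hhead, fun r => ?_⟩
  rcases eq_or_ne (concat (lambdaWord n) x r) 0 with hr | hr
  · refine Or.inr ⟨0, by simp, ?_⟩
    rw [shift_iterate_apply, add_zero, hr, hhead]
    decide
  · obtain ⟨k, rfl⟩ := exists_blockPos_eq_of_concat_lambdaWord_ne_zero hr
    rw [shift_iterate_concat (lambdaWord_ne_nil n)]
    exact lexLe_concat_lambdaWord n (hx.2 k)

end Lambda

section InducedFrequency

variable {n : ℕ} {u v : Fin 3 → ℝ}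

lemma abelianization_lambdaWord (n : ℕ) (u : Fin 3 → ℝ) :
    abelianization (lambdaWord n) u = ![(n + 1) * u 1 + n * u 2, u 0, u 1 + u 2] := by
  ext i
  simp only [abelianization, Fintype.linearCombination_apply, Fin.sum_univ_three, letterCount,
    lambdaWord]
  fin_cases i
  · simp
    ring
  all_goals simp

/-- The inverse of the incidence matrix of `Λ_n`. -/
def deflate (n : ℕ) (v : Fin 3 → ℝ) : Fin 3 → ℝ :=
  ![v 1, v 0 - n * v 2, (n + 1) * v 2 - v 0]

lemma deflate_smul (n : ℕ) (c : ℝ) (v : Fin 3 → ℝ) : deflate n (c • v) = c • deflate n v := by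
  ext i
  fin_cases i <;> simp [deflate] <;> ring

lemma deflate_add (n : ℕ) (u v : Fin 3 → ℝ) :
    deflate n (u + v) = deflate n u + deflate n v := by
  ext i
  fin_cases i <;> simp [deflate] <;> ring

lemma continuous_deflate (n : ℕ) : Continuous (deflate n) := by
  refine continuous_pi fun i => ?_
  fin_cases i <;> simp only [deflate] <;> dsimp <;> fun_prop

lemma deflate_abelianization (n : ℕ) (u : Fin 3 → ℝ) :
    deflate n (abelianization (lambdaWord n) u) = u := by
  rw [abelianization_lambdaWord]
  ext i
  fin_cases i <;> simp [deflate] <;> ring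

lemma abelianization_deflate (n : ℕ) (v : Fin 3 → ℝ) :
    abelianization (lambdaWord n) (deflate n v) = v := by
  rw [abelianization_lambdaWord]
  ext i
  fin_cases i <;> simp [deflate] <;> ring

/-- The digit frequency of `Λ_n t` when `t` has digit frequency `u`. -/
noncomputable def inducedFreq (n : ℕ) (u : Fin 3 → ℝ) : Fin 3 → ℝ :=
  normalizeSum (abelianization (lambdaWord n) u)

lemma exists_inducedFreq_eq_smul (n : ℕ) (hu : u ∈ Delta) :
    ∃ c > (0 : ℝ), inducedFreq n u = c • abelianization (lambdaWord n) u :=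
  ⟨_, inv_pos.2 (one_le_sum_abelianization (lambdaWord_ne_nil n) hu |>.trans_lt' one_pos), rfl⟩

lemma normalizeSum_deflate_inducedFreq (n : ℕ) (hu : u ∈ Delta) :
    normalizeSum (deflate n (inducedFreq n u)) = u := by
  obtain ⟨c, hc, h⟩ := exists_inducedFreq_eq_smul n hu
  rw [h, deflate_smul, deflate_abelianization, normalizeSum_smul hc.ne',
    normalizeSum_of_sum_eq_one (sum_eq_one_of_mem_Delta hu)]

lemma inducedFreq_injOn (n : ℕ) : Set.InjOn (inducedFreq n) Delta := fun u hu v hv h => by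
  rw [← normalizeSum_deflate_inducedFreq n hu, h, normalizeSum_deflate_inducedFreq n hv]

lemma inducedFreq_mem_Delta (n : ℕ) (hu : u ∈ Delta) : inducedFreq n u ∈ Delta := by
  have hsum := one_le_sum_abelianization (lambdaWord_ne_nil n) hu
  refine normalizeSum_mem_Delta (fun i => ?_) (by linarith)
  have h0 := hu.1 0
  have h1 := hu.1 1
  have h2 := hu.1 2
  rw [abelianization_lambdaWord]
  fin_cases i <;> dsimp <;> positivity

lemma inducedFreq_mem_Delta' (n : ℕ) (hu : u ∈ Delta) (hu0 : u 0 < 1) :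
    inducedFreq n u ∈ Delta' := by
  refine ⟨inducedFreq_mem_Delta n hu, ?_⟩
  obtain ⟨c, hc, h⟩ := exists_inducedFreq_eq_smul n hu
  rw [h, abelianization_lambdaWord]
  exact mul_pos hc (by simp; linarith [hu.2])

lemma inducedFreq_zero_lt_one (n : ℕ) (hu : u ∈ Delta) : inducedFreq n u 0 < 1 := by
  obtain ⟨c, hc, h⟩ := exists_inducedFreq_eq_smul n hu
  have hsum := (inducedFreq_mem_Delta n hu).2
  rw [h, abelianization_lambdaWord] at hsum ⊢
  simp only [Pi.smul_apply, Matrix.cons_val, smul_eq_mul] at hsum ⊢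
  have hrest : c * u 0 + c * (u 1 + u 2) = c := by rw [← mul_add, ← add_assoc, hu.2, mul_one]
  linarith

lemma zero_lt_one_of_mem_Delta' (hv : v ∈ Delta') : v 0 < 1 := by
  linarith [hv.1.1 1, hv.1.2, hv.2]

lemma sum_deflate (n : ℕ) (v : Fin 3 → ℝ) : ∑ i, deflate n v i = v 1 + v 2 := by
  simp only [deflate, Fin.sum_univ_three, Matrix.cons_val]
  ring

lemma exists_inducedFreq_eq (hv : v ∈ Delta') : ∃ n, ∃ u ∈ Delta', inducedFreq n u = v := by
  have hfloor := Nat.floor_le (div_nonneg (hv.1.1 0) hv.2.le)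
  have hlt := Nat.lt_floor_add_one (v 0 / v 2)
  set n := ⌊v 0 / v 2⌋₊
  rw [le_div_iff₀ hv.2] at hfloor
  rw [div_lt_iff₀ hv.2] at hlt
  have hsum : 0 < ∑ i, deflate n v i := by
    rw [sum_deflate]
    linarith [hv.1.1 1, hv.2]
  refine ⟨n, normalizeSum (deflate n v), ⟨normalizeSum_mem_Delta (fun i => ?_) hsum, ?_⟩, ?_⟩
  · have := hv.1.1 1
    fin_cases i <;> simp [deflate] <;> linarith
  · exact mul_pos (inv_pos.2 hsum) (by simp [deflate]; linarith)
  · rw [inducedFreq, normalizeSum.eq_def (deflate n v), map_smul, abelianization_deflate,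
      normalizeSum_smul (inv_pos.2 hsum).ne', normalizeSum_of_sum_eq_one
        (sum_eq_one_of_mem_Delta hv.1)]

end InducedFrequency

section InfiniteComposition

variable {n : ℕ → ℕ} {R m : ℕ} {x y : Seq3}

/-- The composition `Λ_{n 0} ∘ ⋯ ∘ Λ_{n (R - 1)}` acting on sequences. -/
def iterLambda : (ℕ → ℕ) → ℕ → Seq3 → Seq3
  | _, 0, x => x
  | n, R + 1, x => concat (lambdaWord (n 0)) (iterLambda (fun r => n (r + 1)) R x)

lemma iterLambda_succ (n : ℕ → ℕ) (R : ℕ) (x : Seq3) :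
    iterLambda n (R + 1) x = concat (lambdaWord (n 0)) (iterLambda (fun r => n (r + 1)) R x) := rfl

lemma iterLambda_add (n : ℕ → ℕ) (R k : ℕ) (x : Seq3) :
    iterLambda n (R + k) x = iterLambda n R (iterLambda (fun r => n (R + r)) k x) := by
  induction R generalizing n with
  | zero => simp only [Nat.zero_add, iterLambda]
  | succ R ih =>
    rw [Nat.add_right_comm, iterLambda_succ, ih, iterLambda_succ]
    simp only [Nat.add_right_comm R 1]

lemma iterLambda_mem_MaxSet (n : ℕ → ℕ) (R : ℕ) (hx : x ∈ MaxSet) :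
    iterLambda n R x ∈ MaxSet := by
  induction R generalizing n with
  | zero => exact hx
  | succ R ih => exact concat_lambdaWord_mem_MaxSet _ (ih _)

lemma concat_concat_lambdaWord_head (a b : ℕ) (x : Seq3) :
    concat (lambdaWord a) (concat (lambdaWord b) x) 0 = 2 :=
  concat_lambdaWord_head (concat_lambdaWord_blockPos_ne_zero b x 0)

-- After the common blocks both images continue with a word starting with `2`.
lemma concat_concat_lambdaWord_congr (a b : ℕ) (h : ∀ i < m, x i = y i) {i : ℕ} (hi : i ≤ m) :
    concat (lambdaWord a) (concat (lambdaWord b) x) i =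
      concat (lambdaWord a) (concat (lambdaWord b) y) i := by
  have hw : ∀ d, (lambdaWord b d).flatMap (lambdaWord a) ≠ [] := fun d =>
    flatMap_ne_nil (lambdaWord_ne_nil b d) (lambdaWord_ne_nil a)
  have hhead := concat_concat_lambdaWord_head a b
  simp only [concat_concat (lambdaWord_ne_nil a) (lambdaWord_ne_nil b)] at hhead ⊢
  have hle := hi.trans (le_blockPos hw x m)
  rcases hle.lt_or_eq with hlt | rfl
  · exact concat_congr hw h hlt
  · have hnext : ∀ z, concat _ z (blockPos _ z m) = 2 := fun z => by
      have := congrFun (shift_iterate_concat hw z m) 0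
      rwa [shift_iterate_apply, add_zero, hhead] at this
    have hpos := congrArg List.length
      (blockPrefix_congr (w := fun d => (lambdaWord b d).flatMap (lambdaWord a)) h)
    rw [hnext, blockPos, hpos, ← blockPos, hnext]

lemma iterLambda_congr (n : ℕ → ℕ) (x y : Seq3) (h : 2 * (m + 1) ≤ R) :
    iterLambda n R x m = iterLambda n R y m := by
  suffices ∀ k n, ∀ i < k, ∀ z z', iterLambda n (2 * k) z i = iterLambda n (2 * k) z' i by
    obtain ⟨k, rfl⟩ := Nat.exists_eq_add_of_le h
    rw [iterLambda_add, iterLambda_add]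
    exact this _ _ _ m.lt_succ_self _ _
  intro k
  induction k with
  | zero => exact fun _ _ hi => absurd hi (Nat.not_lt_zero _)
  | succ k ih =>
    intro n i hi z z'
    exact concat_concat_lambdaWord_congr _ _ (fun j hj => ih _ j hj z z') (Nat.le_of_lt_succ hi)

/-- The image of the infinite composition `Λ_{n 0} ∘ Λ_{n 1} ∘ ⋯`, a single sequence: the first
`m + 1` digits are already determined by the first `2 * (m + 1)` factors. -/
def limitSeq (n : ℕ → ℕ) : Seq3 := fun m => iterLambda n (2 * (m + 1)) 0 m

lemma iterLambda_apply_eq_limitSeq (n : ℕ → ℕ) (x : Seq3) (h : 2 * (m + 1) ≤ R) :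
    iterLambda n R x m = limitSeq n m := by
  obtain ⟨k, rfl⟩ := Nat.exists_eq_add_of_le h
  rw [iterLambda_add]
  exact iterLambda_congr n _ _ le_rfl

lemma tendsto_iterLambda (n : ℕ → ℕ) (x : ℕ → Seq3) :
    Tendsto (fun R => iterLambda n R (x R)) atTop (𝓝 (limitSeq n)) := by
  refine tendsto_pi_nhds.2 fun m => tendsto_const_nhds.congr' ?_
  filter_upwards [eventually_ge_atTop (2 * (m + 1))] with R hR
    using (iterLambda_apply_eq_limitSeq n (x R) hR).symm

lemma limitSeq_eq_concat (n : ℕ → ℕ) :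
    limitSeq n = concat (lambdaWord (n 0)) (limitSeq fun r => n (r + 1)) := by
  ext1 m
  rw [← iterLambda_apply_eq_limitSeq n 0 (Nat.le_succ _), iterLambda_succ]
  exact concat_congr (lambdaWord_ne_nil _) (k := m + 1)
    (fun i hi => iterLambda_apply_eq_limitSeq _ _ (by omega))
    (le_blockPos (lambdaWord_ne_nil _) _ _)

lemma two_mem_MaxSet : (2 : Seq3) ∈ MaxSet :=
  ⟨rfl, fun r => Or.inl (funext fun i => shift_iterate_apply 2 r i)⟩

lemma isClosed_MaxSet : IsClosed MaxSet := by
  refine IsSeqClosed.isClosed fun x y hx hxy => ⟨?_, fun r => ?_⟩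
  · refine tendsto_nhds_unique (tendsto_pi_nhds.1 hxy 0) (tendsto_const_nhds.congr fun k => ?_)
    exact (hx k).1.symm
  · exact lexLe.of_tendsto (((continuous_shift.iterate r).tendsto y).comp hxy) hxy
      (.of_forall fun k => (hx k).2 r)

lemma limitSeq_mem_MaxSet (n : ℕ → ℕ) : limitSeq n ∈ MaxSet :=
  isClosed_MaxSet.mem_of_tendsto (tendsto_iterLambda n fun _ => 2)
    (.of_forall fun R => iterLambda_mem_MaxSet n R two_mem_MaxSet)

end InfiniteComposition

section FutureMinimum

/-- The minimum of `h` over the indices `≥ N`; junk unless `h` is bounded below. -/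
noncomputable def futureMin (h : ℕ → ℤ) (N : ℕ) : ℤ := sInf (h '' Set.Ici N)

/-- `h` stays strictly above `h i` after time `i`. -/
def IsStrictFutureMin (h : ℕ → ℤ) (i : ℕ) : Prop := ∀ j > i, h i < h j

variable {h : ℕ → ℤ} {N j : ℕ}

lemma futureMin_le (hh : Tendsto h atTop atTop) (hj : N ≤ j) : futureMin h N ≤ h j :=
  csInf_le ((bddBelow_range_of_tendsto_atTop_atTop hh).mono (Set.image_subset_range _ _))
    (Set.mem_image_of_mem h hj)

lemma exists_futureMin_eq (hh : Tendsto h atTop atTop) (N : ℕ) : ∃ j ≥ N, h j = futureMin h N :=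
  Int.csInf_mem (Set.nonempty_Ici.image h)
    ((bddBelow_range_of_tendsto_atTop_atTop hh).mono (Set.image_subset_range _ _))

lemma IsStrictFutureMin.futureMin_eq (hh : Tendsto h atTop atTop) (hN : IsStrictFutureMin h N) :
    futureMin h N = h N := by
  refine le_antisymm (futureMin_le hh le_rfl) ?_
  obtain ⟨j, hj, hmin⟩ := exists_futureMin_eq hh N
  rw [← hmin]
  rcases hj.lt_or_eq with hlt | rfl
  · exact (hN j hlt).le
  · exact le_rfl

lemma IsStrictFutureMin.futureMin_succ (hh : Tendsto h atTop atTop) (hN : IsStrictFutureMin h N)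
    (hj : N < j) (hstep : h j = h N + 1) : futureMin h (N + 1) = futureMin h N + 1 := by
  rw [hN.futureMin_eq hh, ← hstep]
  refine le_antisymm (futureMin_le hh hj) ?_
  obtain ⟨k, hk, hmin⟩ := exists_futureMin_eq hh (N + 1)
  rw [← hmin, hstep]
  exact hN k hk

lemma futureMin_succ_of_not (hh : Tendsto h atTop atTop) (hN : ¬ IsStrictFutureMin h N) :
    futureMin h (N + 1) = futureMin h N := by
  simp only [IsStrictFutureMin, not_forall, not_lt] at hN
  obtain ⟨i, hi, hle⟩ := hN
  obtain ⟨j, hj, hmin⟩ := exists_futureMin_eq hh N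
  obtain ⟨k, hk, hmin'⟩ := exists_futureMin_eq hh (N + 1)
  refine le_antisymm ?_ (hmin' ▸ futureMin_le hh (Nat.le_of_succ_le hk))
  rw [← hmin]
  rcases hj.lt_or_eq with hlt | rfl
  · exact futureMin_le hh hlt
  · exact (futureMin_le hh hi).trans hle

lemma tendsto_atTop_of_tendsto_div {c : ℝ} (hc : 0 < c)
    (hlim : Tendsto (fun N : ℕ => (h N : ℝ) / N) atTop (𝓝 c)) : Tendsto h atTop atTop := by
  refine (tendsto_intCast_atTop_iff (R := ℝ)).1
    ((hlim.pos_mul_atTop hc tendsto_natCast_atTop_atTop).congr' ?_)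
  filter_upwards [eventually_ne_atTop 0] with N hN
  exact div_mul_cancel₀ _ (Nat.cast_ne_zero.2 hN)

lemma tendsto_futureMin_div {c : ℝ} (hc : 0 < c)
    (hlim : Tendsto (fun N : ℕ => (h N : ℝ) / N) atTop (𝓝 c)) :
    Tendsto (fun N : ℕ => (futureMin h N : ℝ) / N) atTop (𝓝 c) := by
  have hh := tendsto_atTop_of_tendsto_div hc hlim
  rw [tendsto_order] at hlim ⊢
  refine ⟨fun a ha => ?_, fun a ha => ?_⟩
  · obtain ⟨a', ha', ha'c⟩ := exists_between (max_lt ha hc)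
    obtain ⟨N₀, hN₀⟩ := eventually_atTop.1 (hlim.1 a' ha'c)
    filter_upwards [eventually_ge_atTop N₀, eventually_gt_atTop 0] with N hN hpos
    obtain ⟨j, hj, hmin⟩ := exists_futureMin_eq hh N
    have hjpos : 0 < j := hpos.trans_le hj
    have hdiv := (hN₀ j (hN.trans hj)).le
    rw [le_div_iff₀ (Nat.cast_pos.2 hjpos), hmin] at hdiv
    rw [lt_div_iff₀ (Nat.cast_pos.2 hpos)]
    calc a * N < a' * N := by
          gcongr
          exact (le_max_left a 0).trans_lt ha'
      _ ≤ a' * j := by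
          gcongr
          exact (le_max_right a 0).trans ha'.le
      _ ≤ futureMin h N := hdiv
  · filter_upwards [hlim.2 a ha] with N hN
    refine lt_of_le_of_lt ?_ hN
    gcongr
    exact futureMin_le hh le_rfl

end FutureMinimum

section Desubstitution

/-- The walk with steps `n + 1`, `0`, `-1` at the digits `2`, `1`, `0` of `s`; over the blocks
`1`, `2 0ⁿ⁺¹`, `2 0ⁿ` it rises by `0`, `0`, `1`. -/
def height (n : ℕ) (s : Seq3) (N : ℕ) : ℤ := ∑ i ∈ Finset.range N, ![-1, 0, (n : ℤ) + 1] (s i)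

open Classical in
/-- The sequence with one digit for each nonzero digit of `s`: `0` for a `1`, and for a `2` the
digit `2` or `1` according to whether the height stays above its current value or not. -/
noncomputable def desubst (n : ℕ) (s : Seq3) : Seq3 := fun k =>
  let i := Nat.nth (fun i => s i ≠ 0) k
  if s i = 1 then 0 else if IsStrictFutureMin (height n s) i then 2 else 1

/-- Every digit `2` of `s` is followed by `n` digits `0`. -/
def TwosFollowedByZeros (n : ℕ) (s : Seq3) : Prop := ∀ i, s i = 2 → ∀ j < n, s (i + 1 + j) = 0

variable {n : ℕ} {s : Seq3} {α : Fin 3 → ℝ}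

lemma height_succ (n : ℕ) (s : Seq3) (N : ℕ) :
    height n s (N + 1) = height n s N + ![-1, 0, (n : ℤ) + 1] (s N) :=
  Finset.sum_range_succ _ _

lemma cast_height (n : ℕ) (s : Seq3) (N : ℕ) : (height n s N : ℝ) = deflate n (birk s N) 2 := by
  induction N with
  | zero => simp [height, birk, deflate]
  | succ N ih =>
    rw [height_succ, birk_succ, Int.cast_add, ih, deflate_add, Pi.add_apply]
    generalize s N = d
    fin_cases d <;> simp [deflate]

lemma tendsto_height_div (hs : hasFreq s α) :
    Tendsto (fun N : ℕ => (height n s N : ℝ) / N) atTop (𝓝 (deflate n α 2)) := by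
  refine (tendsto_pi_nhds.1 (((continuous_deflate n).tendsto α).comp hs) 2).congr fun N => ?_
  rw [Function.comp_apply, deflate_smul, cast_height, Pi.smul_apply, smul_eq_mul, inv_mul_eq_div]

lemma IsStrictFutureMin.eq_two {i : ℕ} (hi : IsStrictFutureMin (height n s) i) : s i = 2 := by
  have hlt := hi (i + 1) i.lt_succ_self
  rw [height_succ] at hlt
  generalize s i = d at hlt ⊢
  fin_cases d <;> simp_all

lemma height_add_of_zeros {i : ℕ} (hi : s i = 2) {m : ℕ} (hm : ∀ j < m, s (i + 1 + j) = 0) :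
    height n s (i + 1 + m) = height n s i + (n + 1) - m := by
  induction m with
  | zero => simp [height_succ, hi]
  | succ m ih =>
    rw [← add_assoc, height_succ, ih fun j hj => hm j (by omega), hm m m.lt_succ_self,
      Matrix.cons_val_zero, Nat.cast_succ]
    ring

lemma infinite_nonzero (hh : Tendsto (height n s) atTop atTop) :
    (Set.ofPred fun i => s i ≠ 0).Infinite := by
  by_contra hfin
  obtain ⟨M, hM⟩ := (Set.not_infinite.1 hfin).bddAbove
  have hzero : ∀ i > M, s i = 0 := fun i hi => by
    by_contra hne
    exact absurd (hM hne) (not_le.2 hi)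
  have hanti : ∀ i ≥ M + 1, height n s i ≤ height n s (M + 1) := fun i hi => by
    induction i, hi using Nat.le_induction with
    | base => exact le_rfl
    | succ i hi ih =>
      rw [height_succ, hzero i hi, Matrix.cons_val_zero]
      linarith
  obtain ⟨i, hi, hgt⟩ := (eventually_ge_atTop (M + 1)).and
    (hh.eventually_gt_atTop (height n s (M + 1))) |>.exists
  exact absurd (hanti i hi) (not_le.2 hgt)

open Classical in
lemma desubst_count {i : ℕ} (hi : s i ≠ 0) : desubst n s (Nat.count (fun i => s i ≠ 0) i) =
    if s i = 1 then 0 else if IsStrictFutureMin (height n s) i then 2 else 1 := by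
  simp only [desubst, Nat.nth_count (p := fun i => s i ≠ 0) hi]

open Classical in
lemma futureMin_height_succ (hh : Tendsto (height n s) atTop atTop)
    (hz : TwosFollowedByZeros n s) (N : ℕ) :
    futureMin (height n s) (N + 1) =
      futureMin (height n s) N + if IsStrictFutureMin (height n s) N then 1 else 0 := by
  split_ifs with hN
  · refine hN.futureMin_succ hh (j := N + 1 + n) (by omega) ?_
    rw [height_add_of_zeros hN.eq_two (hz N hN.eq_two)]
    ring
  · rw [futureMin_succ_of_not hh hN, add_zero]

lemma birk_desubst (hh : Tendsto (height n s) atTop atTop)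
    (hz : TwosFollowedByZeros n s) (N : ℕ) :
    birk (desubst n s) (Nat.count (fun i => s i ≠ 0) N) = deflate n (birk s N) +
      ((futureMin (height n s) N - futureMin (height n s) 0 - height n s N : ℤ) : ℝ) •
        ![0, -1, 1] := by
  induction N with
  | zero =>
    ext i
    fin_cases i <;> simp [birk, deflate, height]
  | succ N ih =>
    rw [futureMin_height_succ hh hz, height_succ, Nat.count_succ, birk_succ s, deflate_add]
    rcases eq_or_ne (s N) 0 with h0 | h0
    · have hN : ¬ IsStrictFutureMin (height n s) N := fun hN => by simp [hN.eq_two] at h0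
      rw [if_neg (not_not.2 h0), if_neg hN, add_zero, ih, h0]
      ext i
      fin_cases i <;> simp [deflate] <;> ring
    rw [if_pos h0, birk_succ, desubst_count h0, ih]
    rcases eq_or_ne (s N) 1 with h1 | h1
    · have hN : ¬ IsStrictFutureMin (height n s) N := fun hN => by simp [hN.eq_two] at h1
      rw [if_pos h1, if_neg hN, h1]
      ext i
      fin_cases i <;> simp [deflate]
    · have h2 : s N = 2 := by omega
      rw [if_neg h1, h2]
      by_cases hN : IsStrictFutureMin (height n s) N <;>
        (ext i; fin_cases i <;> simp [deflate, hN] <;> ring)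

lemma cast_count_nonzero (hh : Tendsto (height n s) atTop atTop)
    (hz : TwosFollowedByZeros n s) (N : ℕ) :
    (Nat.count (fun i => s i ≠ 0) N : ℝ) = ∑ i, deflate n (birk s N) i := by
  rw [← sum_birk_apply (desubst n s), birk_desubst hh hz]
  simp only [Fin.sum_univ_three, Pi.add_apply, Pi.smul_apply, smul_eq_mul, Matrix.cons_val]
  ring

lemma hasFreq_desubst (hs : hasFreq s α) (hpos : 0 < deflate n α 2)
    (hsum : ∑ i, deflate n α i ≠ 0) (hz : TwosFollowedByZeros n s) :
    hasFreq (desubst n s) (normalizeSum (deflate n α)) := by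
  have hlim := tendsto_height_div (n := n) hs
  have hh := tendsto_atTop_of_tendsto_div hpos hlim
  have hinf := infinite_nonzero hh
  have hgap : Tendsto (fun N : ℕ => (N : ℝ)⁻¹ * ((futureMin (height n s) N -
      futureMin (height n s) 0 - height n s N : ℤ) : ℝ)) atTop (𝓝 0) := by
    have hconst : Tendsto (fun N : ℕ => (futureMin (height n s) 0 : ℝ) / N) atTop (𝓝 0) :=
      tendsto_natCast_atTop_atTop.const_div_atTop _
    have := ((tendsto_futureMin_div hpos hlim).sub hconst).sub hlim
    rw [sub_zero, sub_self] at this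
    refine this.congr fun N => ?_
    push_cast
    ring
  have hdefl : Tendsto (fun N : ℕ =>
      (N : ℝ)⁻¹ • birk (desubst n s) (Nat.count (fun i => s i ≠ 0) N)) atTop
      (𝓝 (deflate n α)) := by
    have := (((continuous_deflate n).tendsto α).comp hs).add (hgap.smul_const ![0, -1, 1])
    rw [zero_smul, add_zero] at this
    refine this.congr fun N => ?_
    rw [birk_desubst hh hz, smul_add, smul_smul, Function.comp_apply, deflate_smul]
  have hnorm := (tendsto_normalizeSum hsum (eventually_atTop.2 ⟨1, fun N hN => by positivity⟩)
    hdefl).comp (Nat.nth_strictMono hinf).tendsto_atTop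
  refine hnorm.congr fun k => ?_
  rw [Function.comp_apply, Nat.count_nth_of_infinite hinf, normalizeSum_birk]

lemma count_and_futureMin_of_agree (hh : Tendsto (height n s) atTop atTop)
    (hz : TwosFollowedByZeros n s) {i k b : ℕ}
    (hk : Nat.count (fun i => s i ≠ 0) i = k) (hi : IsStrictFutureMin (height n s) i)
    (hagree : ∀ m < blockPos (lambdaWord n) (shift^[k] (desubst n s)) b,
      concat (lambdaWord n) (shift^[k] (desubst n s)) m = s (i + m)) :
    let e := i + blockPos (lambdaWord n) (shift^[k] (desubst n s)) b
    Nat.count (fun i => s i ≠ 0) e = k + b ∧ futureMin (height n s) e = height n s e := by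
  intro e
  have hdefl : deflate n (birk s e) =
      deflate n (birk s i) + birk (shift^[k] (desubst n s)) b := by
    rw [birk_add, deflate_add, ← birk_congr fun m hm => (hagree m hm).trans
      (shift_iterate_apply s i m).symm, abelianization_birk (lambdaWord_ne_nil n),
      deflate_abelianization]
  have hcount : Nat.count (fun i => s i ≠ 0) e = k + b := by
    refine Nat.cast_injective (R := ℝ) ?_
    rw [cast_count_nonzero hh hz, hdefl, Nat.cast_add, ← hk, cast_count_nonzero hh hz,
      ← sum_birk_apply (shift^[k] (desubst n s)) b, ← Finset.sum_add_distrib, hk]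
    rfl
  refine ⟨hcount, ?_⟩
  have hsplit := birk_add (desubst n s) k b
  rw [← hcount, birk_desubst hh hz, hdefl, ← hk, birk_desubst hh hz i, hk] at hsplit
  have hgap := congrFun hsplit 2
  have hmin := hi.futureMin_eq hh
  simp only [Pi.add_apply, Pi.smul_apply, smul_eq_mul, Matrix.cons_val, hmin] at hgap
  push_cast at hgap
  exact Int.cast_injective (α := ℝ) (by linarith)

-- Up to the first difference both sequences have the same blocks, so the height there is its own
-- future minimum, which excludes a digit `0` of `s`.
lemma lexLe_concat_desubst (hh : Tendsto (height n s) atTop atTop)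
    (hz : TwosFollowedByZeros n s) {k : ℕ} (hk : desubst n s k = 2) :
    lexLe (concat (lambdaWord n) (shift^[k] (desubst n s)))
      (shift^[Nat.nth (fun i => s i ≠ 0) k] s) := by
  have hinf := infinite_nonzero hh
  set i := Nat.nth (fun i => s i ≠ 0) k
  have hcount : Nat.count (fun i => s i ≠ 0) i = k := Nat.count_nth_of_infinite hinf k
  have hmin : IsStrictFutureMin (height n s) i := by
    rw [← hcount, desubst_count (Nat.nth_mem_of_infinite hinf k)] at hk
    by_contra hcon
    split_ifs at hk
    all_goals simp at hk
  by_contra hnot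
  obtain ⟨d, hagree, hlt⟩ := exists_lt_of_not_lexLe hnot
  simp only [shift_iterate_apply s] at hagree hlt
  obtain ⟨b, rfl⟩ := exists_blockPos_eq_of_concat_lambdaWord_ne_zero hlt.ne_bot
  obtain ⟨hcount', hmin'⟩ := count_and_futureMin_of_agree hh hz hcount hmin hagree
  set e := i + blockPos (lambdaWord n) (shift^[k] (desubst n s)) b
  have hne : s e ≠ 0 := fun h0 => by
    have hle := futureMin_le hh e.le_succ
    rw [hmin', height_succ, h0, Matrix.cons_val_zero] at hle
    linarith
  have hlt2 : s e < 2 := hlt.trans_le (Fin.le_last _)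
  have h1 : s e = 1 := by omega
  have hdigit := desubst_count (n := n) hne
  rw [hcount', if_pos h1] at hdigit
  rw [concat_lambdaWord_blockPos, shift_iterate_apply, hdigit, h1] at hlt
  exact lt_irrefl _ hlt

lemma lexLe_concat_lambdaWord_of_ne_zero {i j : ℕ} (hi : s i = 2) (hj : j < n)
    (hne : s (i + 1 + j) ≠ 0) {x : Seq3} (hx : x 0 = 2) :
    lexLe (concat (lambdaWord n) x) (shift^[i] s) := by
  have hzero : ∀ m < n, concat (lambdaWord n) x (m + 1) = 0 := fun m hm => by
    have := concat_lambdaWord_blockPos_add (n := n) (x := x) (k := 0) (j := m)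
      (by simpa [hx, lambdaWord] using hm)
    rwa [blockPos_zero, zero_add] at this
  by_contra hnot
  obtain ⟨d, hagree, hlt⟩ := exists_lt_of_not_lexLe hnot
  simp only [shift_iterate_apply] at hagree hlt
  rcases d with _ | d
  · rw [add_zero, hi] at hlt
    exact absurd (Fin.le_last _) (not_le.2 hlt)
  · rcases lt_or_ge d n with hd | hd
    · exact hlt.ne_bot (hzero d hd)
    · refine hne ?_
      rw [add_right_comm, add_assoc, ← hagree (j + 1) (by omega), hzero j hj]

lemma exists_desubstitution {β : Fin 3 → ℝ} (hβ : β ∈ Delta') (hs : hasFreq s (inducedFreq n β)) :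
    ∃ v, hasFreq v β ∧
      ∀ k, v k = 2 → ∃ i, lexLe (concat (lambdaWord n) (shift^[k] v)) (shift^[i] s) := by
  by_cases hz : TwosFollowedByZeros n s
  · obtain ⟨c, hc, hsmul⟩ := exists_inducedFreq_eq_smul n hβ.1
    have hdefl : deflate n (inducedFreq n β) = c • β := by
      rw [hsmul, deflate_smul, deflate_abelianization]
    have hpos : 0 < deflate n (inducedFreq n β) 2 := hdefl ▸ mul_pos hc hβ.2
    have hsum : ∑ i, deflate n (inducedFreq n β) i ≠ 0 := by
      rw [hdefl, sum_smul_apply, sum_eq_one_of_mem_Delta hβ.1, mul_one]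
      exact hc.ne'
    refine ⟨desubst n s, ?_, fun k hk => ⟨_, lexLe_concat_desubst
      (tendsto_atTop_of_tendsto_div hpos (tendsto_height_div hs)) hz hk⟩⟩
    rw [← normalizeSum_deflate_inducedFreq n hβ.1]
    exact hasFreq_desubst hs hpos hsum hz
  · simp only [TwosFollowedByZeros, not_forall] at hz
    obtain ⟨i, hi, j, hj, hne⟩ := hz
    obtain ⟨v, hv⟩ := exists_hasUniformFreq_forwardOrbit hβ.1
    refine ⟨v, hv.hasFreq (self_mem_forwardOrbit v), fun k hk =>
      ⟨i, lexLe_concat_lambdaWord_of_ne_zero hi hj hne ?_⟩⟩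
    rwa [shift_iterate_apply, add_zero]

end Desubstitution

section Itinerary

/-- `b r ∈ Δ'` is the digit frequency induced from `b (r + 1)` by `Λ_{n r}`, for every `r`; the
sequence `n` is an itinerary of `b 0`. -/
def IsItinerary (n : ℕ → ℕ) (b : ℕ → Fin 3 → ℝ) : Prop :=
  ∀ r, b r ∈ Delta' ∧ b r = inducedFreq (n r) (b (r + 1))

lemma exists_isItinerary {α : Fin 3 → ℝ} (hα : α ∈ Delta') :
    ∃ n b, IsItinerary n b ∧ b 0 = α := by
  choose! index next hnext hinduced using fun v (hv : v ∈ Delta') => exists_inducedFreq_eq hv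
  have hmem : ∀ r, next^[r] α ∈ Delta' := fun r =>
    Set.MapsTo.iterate (fun v hv => hnext v hv) r hα
  refine ⟨fun r => index (next^[r] α), fun r => next^[r] α, fun r => ⟨hmem r, ?_⟩, rfl⟩
  simp only [Function.iterate_succ_apply', hinduced _ (hmem r)]

lemma lexLe_iterLambda (n : ℕ → ℕ) (R : ℕ) {x y : Seq3} (h : lexLe x y) :
    lexLe (iterLambda n R x) (iterLambda n R y) := by
  induction R generalizing n with
  | zero => exact h
  | succ R ih => exact lexLe_concat_lambdaWord _ (ih _)

lemma IsInfimax.unique {α : Fin 3 → ℝ} {I J : Seq3} (hI : IsInfimax α I) (hJ : IsInfimax α J) :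
    I = J :=
  (hJ.2.2.2 I hI.2.2.1).antisymm (hI.2.2.2 J hJ.2.2.1)

namespace IsItinerary

variable {n : ℕ → ℕ} {b : ℕ → Fin 3 → ℝ}

lemma tail (h : IsItinerary n b) : IsItinerary (fun r => n (r + 1)) (fun r => b (r + 1)) :=
  fun r => h (r + 1)

lemma drop (h : IsItinerary n b) (R : ℕ) :
    IsItinerary (fun r => n (R + r)) (fun r => b (R + r)) :=
  fun r => h (R + r)

lemma hasFreq_iterLambda (h : IsItinerary n b) {R : ℕ} {x : Seq3} (hx : hasFreq x (b R)) :
    hasFreq (iterLambda n R x) (b 0) := by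
  induction R generalizing n b with
  | zero => exact hx
  | succ R ih =>
    rw [(h 0).2]
    exact hasFreq_concat (lambdaWord_ne_nil _) (ih h.tail hx)

lemma exists_desubstitution (h : IsItinerary n b) {s : Seq3} (hs : hasFreq s (b 0)) (R : ℕ) :
    ∃ v, hasFreq v (b R) ∧
      ∀ k, v k = 2 → ∃ i, lexLe (iterLambda n R (shift^[k] v)) (shift^[i] s) := by
  induction R with
  | zero => exact ⟨s, hs, fun k _ => ⟨k, lexLe.refl _⟩⟩
  | succ R ih =>
    obtain ⟨v, hv, hlow⟩ := ih
    rw [(h R).2] at hv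
    obtain ⟨v', hv', hlow'⟩ := _root_.exists_desubstitution (h (R + 1)).1 hv
    refine ⟨v', hv', fun k hk => ?_⟩
    obtain ⟨j, hj⟩ := hlow' k hk
    have htwo : v j = 2 := by
      have hhead := hj.head_le
      rw [concat_lambdaWord_head (by simp [shift_iterate_apply, hk]), shift_iterate_apply] at hhead
      exact le_antisymm (Fin.le_last _) hhead
    obtain ⟨i, hi⟩ := hlow j htwo
    refine ⟨i, lexLe.trans ?_ hi⟩
    rw [iterLambda_add]
    exact lexLe_iterLambda n R hj

lemma limitSeq_lexLe (h : IsItinerary n b) {w : Seq3} (hw : w ∈ MaxSet) (hfreq : hasFreq w (b 0)) :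
    lexLe (limitSeq n) w := by
  have hbelow : ∀ R, ∃ x, lexLe (iterLambda n R x) w := fun R => by
    obtain ⟨v, hv, hlow⟩ := h.exists_desubstitution hfreq R
    obtain ⟨k, hk⟩ := exists_apply_eq_of_hasFreq hv (h R).1.2.ne'
    obtain ⟨i, hi⟩ := hlow k hk
    exact ⟨_, hi.trans (hw.2 i)⟩
  choose x hx using hbelow
  exact lexLe.of_tendsto (tendsto_iterLambda n x) tendsto_const_nhds (.of_forall hx)

lemma isInfimax (h : IsItinerary n b) : IsInfimax (b 0) (limitSeq n) := by
  refine ⟨exists_mem_MaxSet_hasFreq (h 0).1, limitSeq_mem_MaxSet n,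
    fun w hw => h.limitSeq_lexLe hw.1 hw.2, fun c hc => ?_⟩
  choose w hw hfreq using fun R => exists_mem_MaxSet_hasFreq (h R).1
  exact lexLe.of_tendsto tendsto_const_nhds (tendsto_iterLambda n w) (.of_forall fun R =>
    hc _ ⟨iterLambda_mem_MaxSet n R (hw R), h.hasFreq_iterLambda (hfreq R)⟩)

lemma cons (h : IsItinerary n b) (m : ℕ) :
    IsItinerary (fun r => r.casesOn m n) (fun r => r.casesOn (inducedFreq m (b 0)) b)
  | 0 => ⟨inducedFreq_mem_Delta' m (h 0).1.1 (zero_lt_one_of_mem_Delta' (h 0).1), rfl⟩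
  | r + 1 => h r

end IsItinerary

-- Two steps of `inducedFreq` lead from `Δ` into `Δ'`.
lemma exists_isItinerary_of_mem_DFMZ {n : ℕ → ℕ} {v : Fin 3 → ℝ}
    (hv : v ∈ DFMZ (forwardOrbit (limitSeq n))) : ∃ b, IsItinerary n b ∧ b 0 = v := by
  have hstep : ∀ R, ∀ v ∈ DFMZ (forwardOrbit (limitSeq fun r => n (R + r))),
      ∃ u ∈ DFMZ (forwardOrbit (limitSeq fun r => n (R + 1 + r))), v = inducedFreq (n R) u := by
    intro R v hv
    rw [limitSeq_eq_concat] at hv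
    simpa only [inducedFreq, add_assoc, add_comm 1, add_zero] using
      exists_of_mem_DFMZ_concat (lambdaWord_ne_nil _) hv
  choose! next hnext hinduced using hstep
  let b : ℕ → Fin 3 → ℝ := fun r => Nat.rec v next r
  have hmem : ∀ R, b R ∈ DFMZ (forwardOrbit (limitSeq fun r => n (R + r))) := fun R => by
    induction R with
    | zero =>
      simp only [zero_add]
      exact hv
    | succ R ih => exact hnext R _ ih
  have hinduced : ∀ R, b R = inducedFreq (n R) (b (R + 1)) := fun R => hinduced R _ (hmem R)
  have hDelta : ∀ R, b R ∈ Delta := fun R => DFMZ_subset_Delta _ (hmem R)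
  refine ⟨b, fun R => ⟨?_, hinduced R⟩, rfl⟩
  rw [hinduced R]
  refine inducedFreq_mem_Delta' _ (hDelta (R + 1)) ?_
  rw [hinduced (R + 1)]
  exact inducedFreq_zero_lt_one _ (hDelta (R + 2))

/-- All itineraries with indices `n` start at the same frequency. -/
def IsRegularItinerary (n : ℕ → ℕ) : Prop :=
  ∀ b b', IsItinerary n b → IsItinerary n b' → b 0 = b' 0

namespace IsRegularItinerary

variable {n : ℕ → ℕ} {b : ℕ → Fin 3 → ℝ}

lemma tail (h : IsRegularItinerary n) : IsRegularItinerary fun r => n (r + 1) := by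
  intro b b' hb hb'
  have hcons : (fun r : ℕ => (r.casesOn (n 0) fun r => n (r + 1) : ℕ)) = n :=
    funext fun r => by cases r <;> rfl
  exact inducedFreq_injOn (n 0) (hb 0).1.1 (hb' 0).1.1
    (h _ _ (hcons ▸ hb.cons (n 0)) (hcons ▸ hb'.cons (n 0)))

lemma drop (h : IsRegularItinerary n) (R : ℕ) : IsRegularItinerary fun r => n (R + r) := by
  induction R with
  | zero => simpa only [zero_add] using h
  | succ R ih => simpa only [add_assoc, add_comm 1] using ih.tail

lemma hasUniformFreq (h : IsRegularItinerary n) (hb : IsItinerary n b) :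
    HasUniformFreq (forwardOrbit (limitSeq n)) (b 0) :=
  .of_DFMZ_subset fun v hv => by
    obtain ⟨b', hb', rfl⟩ := exists_isItinerary_of_mem_DFMZ hv
    exact h _ _ hb' hb

end IsRegularItinerary

end Itinerary

section LongBlocks

/-- The words of the composed substitution `Λ_{n 0} ∘ ⋯ ∘ Λ_{n (R - 1)}`. -/
def iterWord (n : ℕ → ℕ) : ℕ → Fin 3 → List (Fin 3)
  | 0, d => [d]
  | R + 1, d => (lambdaWord (n R) d).flatMap (iterWord n R)

variable {n : ℕ → ℕ} {R m : ℕ}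

lemma iterWord_ne_nil (n : ℕ → ℕ) (R : ℕ) (d : Fin 3) : iterWord n R d ≠ [] := by
  induction R generalizing d with
  | zero => exact List.cons_ne_nil _ _
  | succ R ih => exact flatMap_ne_nil (lambdaWord_ne_nil _ _) ih

lemma limitSeq_eq_concat_iterWord (n : ℕ → ℕ) (R : ℕ) :
    limitSeq n = concat (iterWord n R) (limitSeq fun r => n (R + r)) := by
  induction R with
  | zero => simp only [iterWord, concat_singleton, zero_add]
  | succ R ih =>
    rw [ih, limitSeq_eq_concat, concat_concat (iterWord_ne_nil n R) (lambdaWord_ne_nil _)]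
    simp only [add_zero, add_assoc, add_comm 1]
    rfl

lemma length_iterWord_succ (n : ℕ → ℕ) (R : ℕ) (d : Fin 3) :
    (iterWord n (R + 1) d).length =
      ![(iterWord n R 1).length, (iterWord n R 2).length + (n R + 1) * (iterWord n R 0).length,
        (iterWord n R 2).length + n R * (iterWord n R 0).length] d := by
  fin_cases d <;> simp [iterWord, lambdaWord, List.length_flatMap]

lemma lt_length_iterWord_of_le {R' : ℕ} (hR : R ≤ R') (h : ∀ d, m < (iterWord n R d).length) :
    ∀ d, m < (iterWord n R' d).length := by
  induction R', hR using Nat.le_induction with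
  | base => exact h
  | succ R' _ ih =>
    simp only [length_iterWord_succ, Fin.forall_fin_succ]
    exact ⟨ih 1, (ih 2).trans_le (Nat.le_add_right _ _), (ih 2).trans_le (Nat.le_add_right _ _),
      fun d => d.elim0⟩

lemma succ_lt_length_iterWord_add_two (hn : n R ≠ 0) (h : ∀ d, m < (iterWord n R d).length) :
    ∀ d, m + 1 < (iterWord n (R + 2) d).length := by
  have hmul : (iterWord n R 0).length ≤ n R * (iterWord n R 0).length :=
    Nat.le_mul_of_pos_left _ (Nat.pos_of_ne_zero hn)
  have h0 := h 0
  have h2 := h 2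
  have hone : m + 1 < (iterWord n (R + 1) 1).length := by
    simp only [length_iterWord_succ, Matrix.cons_val, add_one_mul]
    omega
  have htwo : m + 1 < (iterWord n (R + 1) 2).length := by
    simp only [length_iterWord_succ, Matrix.cons_val]
    omega
  simp only [length_iterWord_succ n (R + 1), Fin.forall_fin_succ]
  exact ⟨hone, htwo.trans_le (Nat.le_add_right _ _), htwo.trans_le (Nat.le_add_right _ _),
    fun d => d.elim0⟩

lemma exists_lt_length_iterWord (hn : ∃ᶠ r in atTop, n r ≠ 0) (M : ℕ) :
    ∃ R, ∀ d, M < (iterWord n R d).length := by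
  induction M with
  | zero => exact ⟨0, fun d => List.length_pos_iff.2 (iterWord_ne_nil n 0 d)⟩
  | succ M ih =>
    obtain ⟨R, hR⟩ := ih
    obtain ⟨R', hle, hne⟩ := frequently_atTop.1 hn R
    exact ⟨R' + 2, succ_lt_length_iterWord_add_two hne (lt_length_iterWord_of_le hle hR)⟩

lemma concat_const {w : Fin 3 → List (Fin 3)} {d : Fin 3} {k : ℕ}
    (h : w d = List.replicate (k + 1) d) : concat w (fun _ => d) = fun _ => d := by
  have hprefix : ∀ j, blockPrefix w (fun _ => d) j = List.replicate (j * (k + 1)) d := fun j => by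
    induction j with
    | zero => simp [blockPrefix]
    | succ j ih => rw [blockPrefix_succ, ih, h, List.replicate_append_replicate, add_one_mul]
  ext1 m
  rw [concat, hprefix, List.getD_replicate]
  exact m.lt_succ_self.trans_le (Nat.le_mul_of_pos_right _ k.succ_pos)

lemma limitSeq_zero : limitSeq (fun _ => 0) = fun _ => 2 := by
  have hfixed : ∀ R, iterLambda (fun _ => 0) R (fun _ => 2) = fun _ => 2 := fun R => by
    induction R with
    | zero => rfl
    | succ R ih =>
      rw [iterLambda_succ, ih]
      exact concat_const (k := 0) rfl
  exact tendsto_nhds_unique (tendsto_iterLambda _ fun _ _ => 2)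
    (tendsto_const_nhds.congr fun R => (hfixed R).symm)

/-- The sequence `s` can be cut into arbitrarily long words, coded by the digits of a sequence whose
orbit has uniform digit frequencies. -/
def HasUniformLongBlocks (s : Seq3) : Prop :=
  ∀ M : ℕ, ∃ (w : Fin 3 → List (Fin 3)) (x : Seq3) (u : Fin 3 → ℝ),
    (∀ d, M < (w d).length) ∧ s = concat w x ∧ HasUniformFreq (forwardOrbit x) u

-- The words `iterWord n R` grow unless almost all `n r` vanish; then the coding sequence is
-- `2 2 2 ⋯`, which can be regrouped into long blocks.
lemma IsRegularItinerary.hasUniformLongBlocks {b : ℕ → Fin 3 → ℝ} (h : IsRegularItinerary n)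
    (hb : IsItinerary n b) : HasUniformLongBlocks (limitSeq n) := by
  intro M
  have hfreq : ∀ R, HasUniformFreq (forwardOrbit (limitSeq fun r => n (R + r))) (b R) := fun R =>
    (h.drop R).hasUniformFreq (hb.drop R)
  by_cases hn : ∃ᶠ r in atTop, n r ≠ 0
  · obtain ⟨R, hR⟩ := exists_lt_length_iterWord hn M
    exact ⟨iterWord n R, _, _, hR, limitSeq_eq_concat_iterWord n R, hfreq R⟩
  · simp only [not_frequently, not_not, eventually_atTop] at hn
    obtain ⟨R, hR⟩ := hn
    have htail : (limitSeq fun r => n (R + r)) = fun _ => 2 := by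
      rw [← limitSeq_zero]
      exact congrArg limitSeq (funext fun r => hR _ (Nat.le_add_right R r))
    refine ⟨fun d => (List.replicate (M + 1) d).flatMap (iterWord n R), fun _ => 2, _,
      fun d => ?_, ?_, htail ▸ hfreq R⟩
    · have hpos := List.length_pos_iff.2 (iterWord_ne_nil n R d)
      simp only [List.length_flatMap, List.map_replicate, List.sum_replicate, smul_eq_mul]
      exact M.lt_succ_self.trans_le (Nat.le_mul_of_pos_right _ hpos)
    · rw [limitSeq_eq_concat_iterWord n R, htail, ← concat_concat (iterWord_ne_nil n R)
        fun _ => List.replicate_succ_ne_nil, concat_const rfl]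

end LongBlocks

section BlockAverages

variable {f : Seq3 → ℝ} {B η : ℝ} {L : ℕ}

lemma exists_norm_sub_le_of_agree (hf : Continuous f) (hη : 0 < η) :
    ∃ L : ℕ, ∀ x y : Seq3, (∀ i < L, x i = y i) → ‖f x - f y‖ ≤ η := by
  by_contra! hcon
  choose x y hagree hfar using hcon
  obtain ⟨z, φ, hφ, hx⟩ := CompactSpace.tendsto_subseq x
  have hy : Tendsto (y ∘ φ) atTop (𝓝 z) := by
    refine tendsto_pi_nhds.2 fun i => (tendsto_pi_nhds.1 hx i).congr' ?_
    filter_upwards [eventually_gt_atTop i] with j hj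
      using hagree (φ j) i (hj.trans_le hφ.le_apply)
  have hdist : Tendsto (fun j => ‖f (x (φ j)) - f (y (φ j))‖) atTop (𝓝 0) := by
    simpa using (((hf.tendsto z).comp hx).sub ((hf.tendsto z).comp hy)).norm
  obtain ⟨j, hj⟩ := (hdist.eventually_lt_const hη).exists
  exact (hfar (φ j)).not_gt hj

-- Only the last `L` terms of the two sums see a digit beyond the common ones.
lemma norm_birkhoffSum_sub_le_of_agree (hB : ∀ s, ‖f s‖ ≤ B)
    (hL : ∀ x y : Seq3, (∀ i < L, x i = y i) → ‖f x - f y‖ ≤ η) {x y : Seq3} {l : ℕ}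
    (h : ∀ i < l, x i = y i) :
    ‖birkhoffSum shift f l x - birkhoffSum shift f l y‖ ≤ l * η + 2 * L * B := by
  have hη : 0 ≤ η := (norm_nonneg _).trans (hL x x fun _ _ => rfl)
  have hB0 : 0 ≤ B := (norm_nonneg _).trans (hB x)
  obtain ⟨k, j, rfl, hj, hk⟩ : ∃ k j, l = k + j ∧ j ≤ L ∧ ∀ i < k, i + L ≤ l :=
    ⟨l - L, min l L, by omega, min_le_right _ _, by omega⟩
  have hhead : ‖birkhoffSum shift f k x - birkhoffSum shift f k y‖ ≤ k * η := by
    rw [birkhoffSum, birkhoffSum, ← Finset.sum_sub_distrib]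
    refine (norm_sum_le_of_le (n := fun _ => η) _ fun i hi => hL _ _ fun m hm => ?_).trans_eq ?_
    · have := hk i (Finset.mem_range.1 hi)
      rw [shift_iterate_apply, shift_iterate_apply, h _ (by omega)]
    · simp
  have hlast : ∀ s, ‖birkhoffSum shift f j s‖ ≤ L * B := fun s =>
    (norm_birkhoffSum_le hB j s).trans (by gcongr)
  rw [birkhoffSum_add, birkhoffSum_add, add_sub_add_comm]
  calc _ ≤ k * η + (L * B + L * B) :=
        norm_add_le_of_le hhead (norm_sub_le_of_le (hlast _) (hlast _))
    _ ≤ (k + j : ℕ) * η + 2 * L * B := by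
        push_cast
        nlinarith [mul_nonneg j.cast_nonneg hη]

/-- The sum of `f` over the block `w d`, evaluated on the sequence `w d ++ w d ++ ⋯`. -/
noncomputable def blockSum (w : Fin 3 → List (Fin 3)) (f : Seq3 → ℝ) (d : Fin 3) : ℝ :=
  birkhoffSum shift f (w d).length (concat w fun _ => d)

variable {w : Fin 3 → List (Fin 3)} {x : Seq3}

lemma blockPos_eq_dotProduct (w : Fin 3 → List (Fin 3)) (x : Seq3) (r : ℕ) :
    (blockPos w x r : ℝ) = birk x r ⬝ᵥ fun d => ((w d).length : ℝ) := by
  induction r with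
  | zero => simp [blockPos_zero, birk]
  | succ r ih => simp [blockPos_succ, birk_succ, add_dotProduct, ih]

lemma norm_birkhoffSum_block_sub_le (hw : ∀ d, w d ≠ []) (hB : ∀ s, ‖f s‖ ≤ B)
    (hL : ∀ x y : Seq3, (∀ i < L, x i = y i) → ‖f x - f y‖ ≤ η)
    (hlong : ∀ d, 2 * L * B ≤ η * (w d).length) (x : Seq3) :
    ‖birkhoffSum shift f (w (x 0)).length (concat w x) - blockSum w f (x 0)‖ ≤
      2 * η * (w (x 0)).length := by
  have hagree : ∀ i < (w (x 0)).length, concat w x i = concat w (fun _ => x 0) i := fun i hi =>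
    concat_congr hw (k := 1) (by simp) (by rwa [blockPos_succ, blockPos_zero, zero_add])
  refine (norm_birkhoffSum_sub_le_of_agree hB hL hagree).trans ?_
  linarith [hlong (x 0)]

lemma norm_birkhoffSum_blockPos_sub_le (hw : ∀ d, w d ≠ []) (hB : ∀ s, ‖f s‖ ≤ B)
    (hL : ∀ x y : Seq3, (∀ i < L, x i = y i) → ‖f x - f y‖ ≤ η)
    (hlong : ∀ d, 2 * L * B ≤ η * (w d).length) (x : Seq3) (r : ℕ) :
    ‖birkhoffSum shift f (blockPos w x r) (concat w x) - birk x r ⬝ᵥ blockSum w f‖ ≤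
      2 * η * blockPos w x r := by
  induction r with
  | zero => simp [blockPos_zero, birk]
  | succ r ih =>
    have hblock := norm_birkhoffSum_block_sub_le hw hB hL hlong (shift^[r] x)
    rw [shift_iterate_apply, add_zero] at hblock
    rw [blockPos_succ, birkhoffSum_add, shift_iterate_concat hw, birk_succ, add_dotProduct,
      single_one_dotProduct, add_sub_add_comm, Nat.cast_add, mul_add]
    exact norm_add_le_of_le ih hblock

lemma HasUniformFreq.eventually_norm_dotProduct_le {X : Set Seq3} {u H : Fin 3 → ℝ}
    (h : HasUniformFreq X u) (hH : u ⬝ᵥ H = 0) {δ : ℝ} (hδ : 0 < δ) :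
    ∀ᶠ r : ℕ in atTop, ∀ x ∈ X, ‖birk x r ⬝ᵥ H‖ ≤ δ * r := by
  have huc : UniformContinuous fun v : Fin 3 → ℝ => v ⬝ᵥ H :=
    ((dotProductBilin ℝ ℝ).flip H).toContinuousLinearMap.uniformContinuous
  have hlim := Metric.tendstoUniformlyOn_iff.1 (huc.comp_tendstoUniformlyOn h) δ hδ
  filter_upwards [hlim, eventually_gt_atTop 0] with r hr hpos x hx
  have hbound := hr x hx
  simp only [Function.comp_apply, hH, dist_zero_left, birkhoffAverage, smul_dotProduct,
    smul_eq_mul, norm_mul, norm_inv, Real.norm_natCast] at hbound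
  exact ((inv_mul_lt_iff₀ (Nat.cast_pos.2 hpos)).1 hbound).le.trans_eq (mul_comm _ _)

-- `c` is the mean of `G` per digit, so that `G - c • length` has mean zero.
lemma HasUniformFreq.exists_eventually_norm_dotProduct_sub_le {X : Set Seq3} {u : Fin 3 → ℝ}
    (h : HasUniformFreq X u) (hu : u ∈ Delta) (hw : ∀ d, w d ≠ []) (G : Fin 3 → ℝ) {δ : ℝ}
    (hδ : 0 < δ) :
    ∃ c : ℝ, ∀ᶠ r : ℕ in atTop, ∀ x ∈ X, ‖birk x r ⬝ᵥ G - c * blockPos w x r‖ ≤ δ * r := by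
  let ℓ : Fin 3 → ℝ := fun d => (w d).length
  have hmean : u ⬝ᵥ ℓ ≠ 0 := by
    have := one_le_sum_abelianization hw hu
    rw [sum_abelianization] at this
    exact (one_pos.trans_le this).ne'
  refine ⟨u ⬝ᵥ G / u ⬝ᵥ ℓ, ?_⟩
  have hzero : u ⬝ᵥ (G - (u ⬝ᵥ G / u ⬝ᵥ ℓ) • ℓ) = 0 := by
    rw [dotProduct_sub, dotProduct_smul, smul_eq_mul, div_mul_cancel₀ _ hmean, sub_self]
  simpa only [blockPos_eq_dotProduct, dotProduct_sub, dotProduct_smul, smul_eq_mul] using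
    h.eventually_norm_dotProduct_le hzero hδ

lemma exists_eventually_norm_birkhoffSum_sub_le (hw : ∀ d, w d ≠ []) {u : Fin 3 → ℝ}
    (h : HasUniformFreq (forwardOrbit x) u) (hB : ∀ s, ‖f s‖ ≤ B)
    (hL : ∀ x y : Seq3, (∀ i < L, x i = y i) → ‖f x - f y‖ ≤ η)
    (hlong : ∀ d, 2 * L * B ≤ η * (w d).length) {δ : ℝ} (hδ : 0 < δ) :
    ∃ c C : ℝ, ∀ᶠ N : ℕ in atTop, ∀ y ∈ forwardOrbit (concat w x),
      ‖birkhoffSum shift f N y - N * c‖ ≤ (2 * η + δ) * N + C := by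
  have hη : 0 ≤ η := (norm_nonneg _).trans (hL x x fun _ _ => rfl)
  have hu : u ∈ Delta := (h.hasFreq (self_mem_forwardOrbit x)).mem_Delta
  obtain ⟨c, hc⟩ := h.exists_eventually_norm_dotProduct_sub_le hu hw (blockSum w f) hδ
  obtain ⟨r₀, hr₀⟩ := eventually_atTop.1 hc
  let K := maxBlockLength w
  refine ⟨c, 3 * K * B + ‖c‖ * K, ?_⟩
  filter_upwards [eventually_gt_atTop (r₀ * K)] with N hN y hy
  obtain ⟨x', hx', r, hwin⟩ := exists_isBlockWindow hw hy N
  have hr : r₀ ≤ r := by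
    have := lt_of_mul_lt_mul_right (hN.trans_le hwin.le_mul) (Nat.zero_le _)
    omega
  have hedge := hwin.norm_birkhoffSum_sub_le hB
  have hblocks := norm_birkhoffSum_blockPos_sub_le hw hB hL hlong x' r
  have hmean := hr₀ r hr x' hx'
  have hrN : (r : ℝ) ≤ N := Nat.cast_le.2 (hwin.le hw)
  obtain ⟨-, -, -, hle, hge⟩ := hwin
  have hPN : (blockPos w x' r : ℝ) ≤ N := Nat.cast_le.2 hle
  have hcut : ‖c * (blockPos w x' r - N)‖ ≤ ‖c‖ * K := by
    rw [norm_mul, norm_sub_rev, Real.norm_of_nonneg (sub_nonneg.2 hPN)]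
    have : (N : ℝ) ≤ blockPos w x' r + K := mod_cast hge
    gcongr
    linarith
  calc ‖birkhoffSum shift f N y - N * c‖ = ‖_ + _ + _ + c * (blockPos w x' r - N)‖ := by ring_nf
    _ ≤ 3 * K * B + 2 * η * blockPos w x' r + δ * r + ‖c‖ * K :=
      norm_add_le_of_le (norm_add_le_of_le (norm_add_le_of_le hedge hblocks) hmean) hcut
    _ ≤ 3 * K * B + 2 * η * N + δ * N + ‖c‖ * K := by gcongr
    _ = (2 * η + δ) * N + (3 * K * B + ‖c‖ * K) := by ring

lemma HasUniformLongBlocks.exists_eventually_dist_birkhoffAverage_lt {s : Seq3}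
    (hs : HasUniformLongBlocks s) (hf : Continuous f) {ε : ℝ} (hε : 0 < ε) :
    ∃ c : ℝ, ∀ᶠ N : ℕ in atTop, ∀ y ∈ forwardOrbit s,
      dist (birkhoffAverage ℝ shift f N y) c < ε := by
  obtain ⟨B, hB⟩ := isCompact_univ.exists_bound_of_continuousOn hf.continuousOn
  have hη : 0 < ε / 4 := by positivity
  obtain ⟨L, hL⟩ := exists_norm_sub_le_of_agree hf hη
  obtain ⟨M, hM⟩ := exists_nat_ge (2 * L * B / (ε / 4))
  obtain ⟨w, x, u, hw, rfl, hu⟩ := hs M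
  have hlong : ∀ d, 2 * L * B ≤ ε / 4 * (w d).length := fun d => by
    rw [← div_le_iff₀' hη]
    exact hM.trans (Nat.cast_le.2 (hw d).le)
  obtain ⟨c, C, hsum⟩ := exists_eventually_norm_birkhoffSum_sub_le
    (fun d => List.ne_nil_of_length_pos (Nat.zero_lt_of_lt (hw d))) hu (fun s => hB s trivial)
    hL hlong hη
  refine ⟨c, ?_⟩
  filter_upwards [hsum, eventually_ne_atTop 0,
    (tendsto_const_div_atTop_nhds_zero_nat C).eventually_lt_const hη] with N hN hN0 hC y hy
  calc dist (birkhoffAverage ℝ shift f N y) c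
      ≤ ((2 * (ε / 4) + ε / 4) * N + C) / N := norm_birkhoffAverage_sub_le hN0 (hN y hy)
    _ = 3 * (ε / 4) + C / N := by field_simp; ring
    _ < ε := by linarith

lemma HasUniformLongBlocks.exists_tendsto_birkhoffAverage {s : Seq3}
    (hs : HasUniformLongBlocks s) (hf : Continuous f) :
    ∃ c, ∀ t ∈ orbitClosure s, Tendsto (birkhoffAverage ℝ shift f · t) atTop (𝓝 c) := by
  obtain ⟨c, hc⟩ := exists_tendstoUniformlyOn_const ⟨s, self_mem_forwardOrbit s⟩
    fun ε hε => hs.exists_eventually_dist_birkhoffAverage_lt hf hε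
  have hclosure := tendstoUniformlyOn_closure hc
    (continuous_birkhoffAverage continuous_shift hf) continuous_const
  exact ⟨c, fun t ht => hclosure.tendsto_at ht⟩

end BlockAverages

/-- If `α ∈ Δ'` is regular (no `α' ≠ α` shares its infimax sequence),
then the shift restricted to `C_α` is uniquely ergodic, every point of `C_α` has digit
frequency `α`, and the unique invariant measure has rotation vector `α`. -/
theorem stmt17 (α : Fin 3 → ℝ) (hα : α ∈ Delta') (Iα : Seq3) (hI : IsInfimax α Iα)
    (hreg : ∀ α' ∈ Delta', IsInfimax α' Iα → α' = α) :
    (∃ μ : Measure Seq3,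
      (IsProbabilityMeasure μ ∧ MeasurePreserving shift μ μ ∧ μ (orbitClosure Iα) = 1 ∧
        (∫ x, kappa x ∂μ) = α) ∧
      ∀ μ' : Measure Seq3, IsProbabilityMeasure μ' → MeasurePreserving shift μ' μ' →
        μ' (orbitClosure Iα) = 1 → μ' = μ) ∧
    ∀ s ∈ orbitClosure Iα, hasFreq s α := by
  obtain ⟨n, b, hb, rfl⟩ := exists_isItinerary hα
  obtain rfl : Iα = limitSeq n := hI.unique hb.isInfimax
  have hregular : IsRegularItinerary n := fun b₁ b₂ hb₁ hb₂ =>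
    (hreg _ (hb₁ 0).1 hb₁.isInfimax).trans (hreg _ (hb₂ 0).1 hb₂.isInfimax).symm
  have hfreq : ∀ s ∈ orbitClosure (limitSeq n), hasFreq s (b 0) := fun s hs =>
    (hregular.hasUniformFreq hb).closure.hasFreq hs
  have hblocks := hregular.hasUniformLongBlocks hb
  obtain ⟨μ, hμprob, hμinv, hμ⟩ := exists_invariant_probabilityMeasure continuous_shift
    isClosed_closure (mapsTo_shift_orbitClosure _) ⟨_, self_mem_orbitClosure (limitSeq n)⟩
  have hmeas : MeasurableSet (orbitClosure (limitSeq n)) := isClosed_closure.measurableSet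
  have hae : ∀ᵐ s ∂μ, s ∈ orbitClosure (limitSeq n) := (prob_compl_eq_zero_iff hmeas).2 hμ
  refine ⟨⟨μ, ⟨hμprob, hμinv, hμ, ?_⟩, fun μ' _ hμ'inv hμ' => ?_⟩, hfreq⟩
  · exact integral_eq_of_tendsto_birkhoffAverage continuous_shift hμinv continuous_kappa
      norm_kappa_le (hae.mono hfreq)
  · exact measure_eq_of_tendsto_birkhoffAverage continuous_shift hmeas hμ'inv hμ' hμinv hμ
      fun f hf => hblocks.exists_tendsto_birkhoffAverage hf
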